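/- arXiv:1011.4725 — 2 statements merged into one kernel-verified Lean document; each statement's English description precedes it below -/
import Mathlib

section
/- For every distortion pair (d1,d2) ∈ ℝ₊², the common-reconstruction rate-distortion function satisfies R_CR(d1,d2) = min over p_{X̂Ŷ|XY} ∈ 𝒫_{X̂Ŷ|XY}(d1,d2) of max{ I(X;X̂,Ŷ|Y), I(Y;X̂,Ŷ|X) }, where the mutual informations are computed under the joint law q_{XY}(x,y)·p_{X̂Ŷ|XY}(x̂,ŷ|x,y). -/
open scoped BigOperators Classical

noncomputable section

namespace TWR

/-- Base-2 Shannon entropy of a finitely supported distribution (with the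
convention `0 * log 0 = 0`, automatic since `Real.logb 2 0 = 0`). -/
def H2 {α : Type} [Fintype α] (p : α → ℝ) : ℝ :=
  -∑ a, p a * Real.logb 2 (p a)

/-- `p` is a probability mass function. -/
def IsPmf {α : Type} [Fintype α] (p : α → ℝ) : Prop :=
  (∀ a, 0 ≤ p a) ∧ ∑ a, p a = 1

/-- `W` is a conditional pmf. -/
def IsCondPmf {α β : Type} [Fintype β] (W : α → β → ℝ) : Prop :=
  ∀ a, IsPmf (W a)

/-- Mutual information `I(A;B)` (base 2) of a joint pmf on `α × β`. -/
def MI {α β : Type} [Fintype α] [Fintype β] (p : α × β → ℝ) : ℝ :=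
  H2 (fun a => ∑ b, p (a, b)) + H2 (fun b => ∑ a, p (a, b)) - H2 p

/-- Conditional entropy `H(A|B)` of a joint pmf on `α × β`. -/
def condH {α β : Type} [Fintype α] [Fintype β] (p : α × β → ℝ) : ℝ :=
  H2 p - H2 (fun b => ∑ a, p (a, b))

/-- Conditional mutual information `I(A;C|B)` of a joint pmf on `α × β × γ`,
conditioning on the middle coordinate (`I(A;C|B) = H(A,B)+H(B,C)-H(A,B,C)-H(B)`). -/
def condMI {α β γ : Type} [Fintype α] [Fintype β] [Fintype γ] (p : α × β × γ → ℝ) : ℝ :=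
  H2 (fun ab : α × β => ∑ c, p (ab.1, ab.2, c)) +
    H2 (fun bc : β × γ => ∑ a, p (a, bc.1, bc.2)) -
    H2 p - H2 (fun b : β => ∑ a, ∑ c, p (a, b, c))

/-- Markov chain `A − B − C` for a joint pmf on `α × β × γ`. -/
def Markov {α β γ : Type} [Fintype α] [Fintype β] [Fintype γ] (p : α × β × γ → ℝ) : Prop :=
  ∀ a b c, p (a, b, c) * (∑ a', ∑ c', p (a', b, c')) =
    (∑ c', p (a, b, c')) * (∑ a', p (a', b, c))

variable {𝒳 𝒴 Xh Yh 𝒲 𝒰 𝒱 : Type}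
variable [Fintype 𝒳] [Fintype 𝒴] [Fintype Xh] [Fintype Yh]
variable [Fintype 𝒲] [Fintype 𝒰] [Fintype 𝒱]

/-- The i.i.d. block source. -/
def iid (q : 𝒳 × 𝒴 → ℝ) (n : ℕ) : (Fin n → 𝒳) × (Fin n → 𝒴) → ℝ :=
  fun xy => ∏ i, q (xy.1 i, xy.2 i)

/-- Average distortion at receiver 1 of the RD code `(f, g1, ·)`. -/
def Delta1 (q : 𝒳 × 𝒴 → ℝ) (δ1 : 𝒳 → Xh → ℝ) {n m : ℕ}
    (f : (Fin n → 𝒳) × (Fin n → 𝒴) → Fin m)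
    (g1 : Fin m × (Fin n → 𝒴) → Fin n → Xh) : ℝ :=
  ∑ xy : (Fin n → 𝒳) × (Fin n → 𝒴),
    iid q n xy * ((n : ℝ)⁻¹ * ∑ i, δ1 (xy.1 i) (g1 (f xy, xy.2) i))

/-- Average distortion at receiver 2 of the RD code `(f, ·, g2)`. -/
def Delta2 (q : 𝒳 × 𝒴 → ℝ) (δ2 : 𝒴 → Yh → ℝ) {n m : ℕ}
    (f : (Fin n → 𝒳) × (Fin n → 𝒴) → Fin m)
    (g2 : Fin m × (Fin n → 𝒳) → Fin n → Yh) : ℝ :=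
  ∑ xy : (Fin n → 𝒳) × (Fin n → 𝒴),
    iid q n xy * ((n : ℝ)⁻¹ * ∑ i, δ2 (xy.2 i) (g2 (f xy, xy.1) i))

/-- `r` is a `(d1,d2)`-achievable rate (source coding). -/
def RDAchievable (q : 𝒳 × 𝒴 → ℝ) (δ1 : 𝒳 → Xh → ℝ) (δ2 : 𝒴 → Yh → ℝ)
    (d1 d2 r : ℝ) : Prop :=
  ∀ ε > (0 : ℝ), ∃ (n m : ℕ) (f : (Fin n → 𝒳) × (Fin n → 𝒴) → Fin m)
    (g1 : Fin m × (Fin n → 𝒴) → Fin n → Xh)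
    (g2 : Fin m × (Fin n → 𝒳) → Fin n → Yh),
    0 < n ∧ Real.logb 2 m / n ≤ r + ε ∧
    Delta1 q δ1 f g1 ≤ d1 + ε ∧ Delta2 q δ2 f g2 ≤ d2 + ε

/-- The rate-distortion function `R(d1,d2)`. -/
def RD (q : 𝒳 × 𝒴 → ℝ) (δ1 : 𝒳 → Xh → ℝ) (δ2 : 𝒴 → Yh → ℝ) (d1 d2 : ℝ) : ℝ :=
  sInf {r : ℝ | 0 ≤ r ∧ RDAchievable q δ1 δ2 d1 d2 r}

/-- `r` is `(d1,d2)`-achievable with common reconstructions. -/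
def CRAchievable (q : 𝒳 × 𝒴 → ℝ) (δ1 : 𝒳 → Xh → ℝ) (δ2 : 𝒴 → Yh → ℝ)
    (d1 d2 r : ℝ) : Prop :=
  ∀ ε > (0 : ℝ), ∃ (n m : ℕ) (f : (Fin n → 𝒳) × (Fin n → 𝒴) → Fin m)
    (g1 : Fin m × (Fin n → 𝒴) → Fin n → Xh)
    (g2 : Fin m × (Fin n → 𝒳) → Fin n → Yh)
    (φ1 : Fin m × (Fin n → 𝒴) → Fin n → Yh)
    (φ2 : Fin m × (Fin n → 𝒳) → Fin n → Xh),
    0 < n ∧ Real.logb 2 m / n ≤ r + ε ∧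
    Delta1 q δ1 f g1 ≤ d1 + ε ∧ Delta2 q δ2 f g2 ≤ d2 + ε ∧
    (∑ xy : (Fin n → 𝒳) × (Fin n → 𝒴),
      if φ2 (f xy, xy.1) = g1 (f xy, xy.2) then 0 else iid q n xy) ≤ ε ∧
    (∑ xy : (Fin n → 𝒳) × (Fin n → 𝒴),
      if φ1 (f xy, xy.2) = g2 (f xy, xy.1) then 0 else iid q n xy) ≤ ε

/-- The common-reconstruction rate-distortion function `R_CR(d1,d2)`. -/
def CRRD (q : 𝒳 × 𝒴 → ℝ) (δ1 : 𝒳 → Xh → ℝ) (δ2 : 𝒴 → Yh → ℝ) (d1 d2 : ℝ) : ℝ :=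
  sInf {r : ℝ | 0 ≤ r ∧ CRAchievable q δ1 δ2 d1 d2 r}

/-- The conditional rate-distortion function `R_{X|Y}(d1)`. -/
def condRD (q : 𝒳 × 𝒴 → ℝ) (δ1 : 𝒳 → Xh → ℝ) (d1 : ℝ) : ℝ :=
  sInf {r : ℝ | ∃ W : 𝒳 × 𝒴 → Xh → ℝ, IsCondPmf W ∧
    (∑ x, ∑ y, ∑ xh, q (x, y) * W (x, y) xh * δ1 x xh) ≤ d1 ∧
    r = condMI (fun t : 𝒳 × 𝒴 × Xh => q (t.1, t.2.1) * W (t.1, t.2.1) t.2.2)}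

/-- Swap the two components of a joint source. -/
def swap (q : 𝒳 × 𝒴 → ℝ) : 𝒴 × 𝒳 → ℝ := fun t => q (t.2, t.1)

/-- The marginal rate-distortion function `R_X(d)`. -/
def margRD (qX : 𝒳 → ℝ) (δ1 : 𝒳 → Xh → ℝ) (d1 : ℝ) : ℝ :=
  sInf {r : ℝ | ∃ W : 𝒳 → Xh → ℝ, IsCondPmf W ∧
    (∑ x, ∑ xh, qX x * W x xh * δ1 x xh) ≤ d1 ∧
    r = MI (fun t : 𝒳 × Xh => qX t.1 * W t.1 t.2)}

def margX (q : 𝒳 × 𝒴 → ℝ) : 𝒳 → ℝ := fun x => ∑ y, q (x, y)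
def margY (q : 𝒳 × 𝒴 → ℝ) : 𝒴 → ℝ := fun y => ∑ x, q (x, y)

/-- The joint rate-distortion function `R_{XY}(d1,d2)`. -/
def jointRD (q : 𝒳 × 𝒴 → ℝ) (δ1 : 𝒳 → Xh → ℝ) (δ2 : 𝒴 → Yh → ℝ) (d1 d2 : ℝ) : ℝ :=
  sInf {r : ℝ | ∃ W : 𝒳 × 𝒴 → Xh × Yh → ℝ, IsCondPmf W ∧
    (∑ xy : 𝒳 × 𝒴, ∑ z : Xh × Yh, q xy * W xy z * δ1 xy.1 z.1) ≤ d1 ∧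
    (∑ xy : 𝒳 × 𝒴, ∑ z : Xh × Yh, q xy * W xy z * δ2 xy.2 z.2) ≤ d2 ∧
    r = MI (fun t : (𝒳 × 𝒴) × (Xh × Yh) => q t.1 * W t.1 t.2)}

/-- The Wyner–Ziv rate-distortion function `R^{WZ}_{X|Y}(d1)`
(with auxiliary alphabet of cardinality `|𝒳| + 1`). -/
def wzRD (q : 𝒳 × 𝒴 → ℝ) (δ1 : 𝒳 → Xh → ℝ) (d1 : ℝ) : ℝ :=
  sInf {r : ℝ | ∃ p : Fin (Fintype.card 𝒳 + 1) × 𝒳 × 𝒴 → ℝ, IsPmf p ∧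
    (∀ x y, (∑ a, p (a, x, y)) = q (x, y)) ∧ Markov p ∧
    (∃ π1 : Fin (Fintype.card 𝒳 + 1) × 𝒴 → Xh,
      (∑ a, ∑ x, ∑ y, p (a, x, y) * δ1 x (π1 (a, y))) ≤ d1) ∧
    r = condMI (fun t : 𝒳 × 𝒴 × Fin (Fintype.card 𝒳 + 1) => p (t.2.2, t.1, t.2.1))}

/-- The set over which the single-letter CR formula
`max{I(X;X̂,Ŷ|Y), I(Y;X̂,Ŷ|X)}` is minimised. -/
def crFormulaSet (q : 𝒳 × 𝒴 → ℝ) (δ1 : 𝒳 → Xh → ℝ) (δ2 : 𝒴 → Yh → ℝ)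
    (d1 d2 : ℝ) : Set ℝ :=
  {r : ℝ | ∃ W : 𝒳 × 𝒴 → Xh × Yh → ℝ, IsCondPmf W ∧
    (∑ x, ∑ y, ∑ z : Xh × Yh, q (x, y) * W (x, y) z * δ1 x z.1) ≤ d1 ∧
    (∑ x, ∑ y, ∑ z : Xh × Yh, q (x, y) * W (x, y) z * δ2 y z.2) ≤ d2 ∧
    r = max
      (condMI (fun t : 𝒳 × 𝒴 × (Xh × Yh) => q (t.1, t.2.1) * W (t.1, t.2.1) t.2.2))
      (condMI (fun t : 𝒴 × 𝒳 × (Xh × Yh) => q (t.2.1, t.1) * W (t.2.1, t.1) t.2.2))}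

/-- Joint law of source blocks and channel outputs for a JSC encoder. -/
def jscP (q : 𝒳 × 𝒴 → ℝ) (qUV : 𝒲 → 𝒰 × 𝒱 → ℝ) {n m : ℕ}
    (f : (Fin n → 𝒳) × (Fin n → 𝒴) → Fin m → 𝒲)
    (x : Fin n → 𝒳) (y : Fin n → 𝒴) (u : Fin m → 𝒰) (v : Fin m → 𝒱) : ℝ :=
  (∏ i, q (x i, y i)) * ∏ j, qUV (f (x, y) j) (u j, v j)

/-- `(d1,d2)` is achievable by joint source-channel coding with source rate `κs`
and channel rate `κc` (bandwidth expansion `κc/κs`). -/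
def JSCAchievable (q : 𝒳 × 𝒴 → ℝ) (qUV : 𝒲 → 𝒰 × 𝒱 → ℝ)
    (δ1 : 𝒳 → Xh → ℝ) (δ2 : 𝒴 → Yh → ℝ) (κs κc d1 d2 : ℝ) : Prop :=
  ∀ ε > (0 : ℝ), ∃ (t n m : ℕ) (f : (Fin n → 𝒳) × (Fin n → 𝒴) → Fin m → 𝒲)
    (g1 : (Fin m → 𝒰) × (Fin n → 𝒴) → Fin n → Xh)
    (g2 : (Fin m → 𝒱) × (Fin n → 𝒳) → Fin n → Yh),
    0 < t ∧ (n : ℝ) = κs * t ∧ (m : ℝ) = κc * t ∧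
    (∑ x : Fin n → 𝒳, ∑ y : Fin n → 𝒴, ∑ u : Fin m → 𝒰, ∑ v : Fin m → 𝒱,
      jscP q qUV f x y u v * ((n : ℝ)⁻¹ * ∑ i, δ1 (x i) (g1 (u, y) i))) ≤ d1 + ε ∧
    (∑ x : Fin n → 𝒳, ∑ y : Fin n → 𝒴, ∑ u : Fin m → 𝒰, ∑ v : Fin m → 𝒱,
      jscP q qUV f x y u v * ((n : ℝ)⁻¹ * ∑ i, δ2 (y i) (g2 (v, x) i))) ≤ d2 + ε

/-- `(d1,d2)` is achievable by joint source-channel coding with common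
reconstructions, source rate `κs` and channel rate `κc`. -/
def CRJSCAchievable (q : 𝒳 × 𝒴 → ℝ) (qUV : 𝒲 → 𝒰 × 𝒱 → ℝ)
    (δ1 : 𝒳 → Xh → ℝ) (δ2 : 𝒴 → Yh → ℝ) (κs κc d1 d2 : ℝ) : Prop :=
  ∀ ε > (0 : ℝ), ∃ (t n m : ℕ) (f : (Fin n → 𝒳) × (Fin n → 𝒴) → Fin m → 𝒲)
    (g1 : (Fin m → 𝒰) × (Fin n → 𝒴) → Fin n → Xh)
    (g2 : (Fin m → 𝒱) × (Fin n → 𝒳) → Fin n → Yh)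
    (φ1 : (Fin m → 𝒰) × (Fin n → 𝒴) → Fin n → Yh)
    (φ2 : (Fin m → 𝒱) × (Fin n → 𝒳) → Fin n → Xh),
    0 < t ∧ (n : ℝ) = κs * t ∧ (m : ℝ) = κc * t ∧
    (∑ x : Fin n → 𝒳, ∑ y : Fin n → 𝒴, ∑ u : Fin m → 𝒰, ∑ v : Fin m → 𝒱,
      jscP q qUV f x y u v * ((n : ℝ)⁻¹ * ∑ i, δ1 (x i) (g1 (u, y) i))) ≤ d1 + ε ∧
    (∑ x : Fin n → 𝒳, ∑ y : Fin n → 𝒴, ∑ u : Fin m → 𝒰, ∑ v : Fin m → 𝒱,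
      jscP q qUV f x y u v * ((n : ℝ)⁻¹ * ∑ i, δ2 (y i) (g2 (v, x) i))) ≤ d2 + ε ∧
    (∑ x : Fin n → 𝒳, ∑ y : Fin n → 𝒴, ∑ u : Fin m → 𝒰, ∑ v : Fin m → 𝒱,
      if φ2 (v, x) = g1 (u, y) then 0 else jscP q qUV f x y u v) ≤ ε ∧
    (∑ x : Fin n → 𝒳, ∑ y : Fin n → 𝒴, ∑ u : Fin m → 𝒰, ∑ v : Fin m → 𝒱,
      if φ1 (u, y) = g2 (v, x) then 0 else jscP q qUV f x y u v) ≤ ε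

/-- `I(W;U)` under the joint law `pW · qUV` (U-marginal of the broadcast channel). -/
def chMIU (qUV : 𝒲 → 𝒰 × 𝒱 → ℝ) (pW : 𝒲 → ℝ) : ℝ :=
  MI (fun t : 𝒲 × 𝒰 => pW t.1 * ∑ v, qUV t.1 (t.2, v))

/-- `I(W;V)` under the joint law `pW · qUV` (V-marginal of the broadcast channel). -/
def chMIV (qUV : 𝒲 → 𝒰 × 𝒱 → ℝ) (pW : 𝒲 → ℝ) : ℝ :=
  MI (fun t : 𝒲 × 𝒱 => pW t.1 * ∑ u, qUV t.1 (u, t.2))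

/-- The doubly symmetric binary source with crossover probability `ρ`. -/
def dsbs (ρ : ℝ) : Bool × Bool → ℝ :=
  fun t => if t.1 = t.2 then (1 - ρ) / 2 else ρ / 2

/-- The Hamming distortion measure. -/
def dHam {α : Type} : α → α → ℝ := fun a b => if a = b then 0 else 1

/-- The binary entropy function (base 2). -/
def binEnt (x : ℝ) : ℝ := -(x * Real.logb 2 x) - (1 - x) * Real.logb 2 (1 - x)

/-- A difference distortion measure built from a per-letter function of the
(modular) difference. -/
def diffD {l : ℕ} (δ : Fin l → ℝ) : Fin l → Fin l → ℝ := fun a b => δ (a - b)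

/-- Capacity of the modulo-additive channel with noise `pN` and input
distortion constraint `d`. -/
def Cadd {l : ℕ} (δ : Fin l → ℝ) (d : ℝ) (pN : Fin l → ℝ) : ℝ :=
  sSup {r : ℝ | ∃ pW : Fin l → ℝ, IsPmf pW ∧ (∑ w, pW w * δ w) ≤ d ∧
    r = MI (fun t : Fin l × Fin l => pW t.1 * pN (t.2 - t.1))}

/-- The minimax (worst-noise) capacity under distortion constraint `d`. -/
def Cworst {l : ℕ} (δ : Fin l → ℝ) (d : ℝ) : ℝ :=
  sInf {r : ℝ | ∃ pN : Fin l → ℝ, IsPmf pN ∧ (∑ x, pN x * δ x) ≤ d ∧ r = Cadd δ d pN}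

/-- Wyner's common information `K(X;Y)` (auxiliary alphabet of size 4). -/
def wynerK (q : 𝒳 × 𝒴 → ℝ) : ℝ :=
  sInf {r : ℝ | ∃ W : 𝒳 × 𝒴 → Fin 4 → ℝ, IsCondPmf W ∧
    Markov (fun t : 𝒳 × Fin 4 × 𝒴 => q (t.1, t.2.2) * W (t.1, t.2.2) t.2.1) ∧
    r = MI (fun t : (𝒳 × 𝒴) × Fin 4 => q t.1 * W t.1 t.2)}

/-- The one-description (Kimura–Uyematsu) upper bound `R_U*(d1,d2)`. -/
def oneDescUB (q : 𝒳 × 𝒴 → ℝ) (δ1 : 𝒳 → Xh → ℝ) (δ2 : 𝒴 → Yh → ℝ) (d1 d2 : ℝ) : ℝ :=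
  sInf {r : ℝ | ∃ W : 𝒳 × 𝒴 → Fin (Fintype.card 𝒳 * Fintype.card 𝒴 + 2) → ℝ,
    IsCondPmf W ∧
    (∃ π1 : Fin (Fintype.card 𝒳 * Fintype.card 𝒴 + 2) × 𝒴 → Xh,
      (∑ x, ∑ y, ∑ c, q (x, y) * W (x, y) c * δ1 x (π1 (c, y))) ≤ d1) ∧
    (∃ π2 : Fin (Fintype.card 𝒳 * Fintype.card 𝒴 + 2) × 𝒳 → Yh,
      (∑ x, ∑ y, ∑ c, q (x, y) * W (x, y) c * δ2 y (π2 (c, x))) ≤ d2) ∧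
    r = max
      (condMI (fun t : 𝒳 × 𝒴 × Fin (Fintype.card 𝒳 * Fintype.card 𝒴 + 2) =>
        q (t.1, t.2.1) * W (t.1, t.2.1) t.2.2))
      (condMI (fun t : 𝒴 × 𝒳 × Fin (Fintype.card 𝒳 * Fintype.card 𝒴 + 2) =>
        q (t.2.1, t.1) * W (t.2.1, t.1) t.2.2))}

end TWR

namespace TWR

lemma sum_pi_prod {ι S : Type} [Fintype ι] [DecidableEq ι] [Fintype S] (h : ι → S → ℝ) :
    ∑ s : ι → S, ∏ i, h i (s i) = ∏ i, ∑ a, h i a := by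
  exact (Fintype.prod_sum h).symm

lemma sum_pi_one {ι S : Type} [Fintype ι] [DecidableEq ι] [Fintype S] (p : S → ℝ) (hp : ∑ a, p a = 1) :
    ∑ s : ι → S, ∏ i, p (s i) = 1 := by
  rw [sum_pi_prod (fun _ => p)]; simp [hp]

lemma sum_pi_marg {ι S : Type} [Fintype ι] [DecidableEq ι] [Fintype S] (p : S → ℝ) (hp : ∑ a, p a = 1)
    (u : S → ℝ) (i : ι) :
    ∑ s : ι → S, (∏ l, p (s l)) * u (s i) = ∑ a, p a * u a := by
  have h : ∀ s : ι → S, (∏ l, p (s l)) * u (s i)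
      = ∏ l, (p (s l) * (if l = i then u (s l) else 1)) := by
    intro s
    rw [Finset.prod_mul_distrib]
    simp
  simp_rw [h]
  rw [sum_pi_prod (fun l a => p a * (if l = i then u a else 1))]
  rw [Finset.prod_eq_single i]
  · simp
  · intro b _ hb; simp [hb, hp]
  · simp

lemma sum_pi_marg2 {ι S : Type} [Fintype ι] [DecidableEq ι] [Fintype S] (p : S → ℝ) (hp : ∑ a, p a = 1)
    (u v : S → ℝ) (i j : ι) (hij : i ≠ j) :
    ∑ s : ι → S, (∏ l, p (s l)) * (u (s i) * v (s j)) =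
      (∑ a, p a * u a) * (∑ a, p a * v a) := by
  have h : ∀ s : ι → S, (∏ l, p (s l)) * (u (s i) * v (s j))
      = ∏ l, (p (s l) * ((if l = i then u (s l) else 1) * (if l = j then v (s l) else 1))) := by
    intro s
    rw [Finset.prod_mul_distrib, Finset.prod_mul_distrib]
    simp
  simp_rw [h]
  rw [sum_pi_prod (fun l a => p a * ((if l = i then u a else 1) * (if l = j then v a else 1)))]
  rw [Finset.prod_eq_mul i j hij]
  · simp [hij, hij.symm]
  · intro b _ hb; simp [hb.1, hb.2, hp]
  · simp
  · simp

lemma second_moment {S : Type} [Fintype S] (p : S → ℝ) (hp : ∑ a, p a = 1)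
    (g : S → ℝ) (hg : ∑ a, p a * g a = 0) (n : ℕ) :
    ∑ s : Fin n → S, (∏ l, p (s l)) * (∑ i, g (s i)) ^ 2 = n * ∑ a, p a * g a ^ 2 := by
  have h : ∀ s : Fin n → S, (∏ l, p (s l)) * (∑ i, g (s i)) ^ 2 =
      ∑ i, ∑ j, (∏ l, p (s l)) * (g (s i) * g (s j)) := by
    intro s
    rw [sq, Finset.sum_mul_sum, Finset.mul_sum]
    simp_rw [Finset.mul_sum]
  simp_rw [h]
  rw [Finset.sum_comm]
  have h2 : ∀ i : Fin n, ∑ s : Fin n → S, ∑ j, (∏ l, p (s l)) * (g (s i) * g (s j)) =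
      ∑ a, p a * g a ^ 2 := by
    intro i
    rw [Finset.sum_comm, Finset.sum_eq_single i]
    · rw [← sum_pi_marg p hp (fun a => g a ^ 2) i]
      simp_rw [sq]
    · intro j _ hj
      rw [sum_pi_marg2 p hp g g i j hj.symm, hg, zero_mul]
    · simp
  simp_rw [h2]
  simp

lemma lln {S : Type} [Fintype S] (p : S → ℝ) (hp : IsPmf p)
    (h : S → ℝ) (ε η : ℝ) (hε : 0 < ε) (hη : 0 < η) :
    ∀ᶠ n : ℕ in Filter.atTop,
      ∑ s : Fin n → S, (∏ l, p (s l)) *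
        (if |∑ i, h (s i) - n * ∑ a, p a * h a| ≤ n * ε then 0 else 1) ≤ η := by
  set μ := ∑ a, p a * h a with hμ
  set g : S → ℝ := fun a => h a - μ with hgd
  have hg : ∑ a, p a * g a = 0 := by
    simp [hgd, mul_sub, Finset.sum_sub_distrib, ← Finset.sum_mul, hp.2, ← hμ]
  set V := ∑ a, p a * g a ^ 2 with hV
  have hV0 : 0 ≤ V := Finset.sum_nonneg fun a _ => mul_nonneg (hp.1 a) (sq_nonneg _)
  have hev : ∀ᶠ n : ℕ in Filter.atTop, V / (ε ^ 2 * η) ≤ (n : ℝ) :=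
    tendsto_natCast_atTop_atTop.eventually_ge_atTop _
  filter_upwards [hev, Filter.eventually_gt_atTop 0] with n hn hn0
  have hn0' : (0 : ℝ) < n := by exact_mod_cast hn0
  have hb : ∀ s : Fin n → S, (∏ l, p (s l)) *
        (if |∑ i, h (s i) - n * μ| ≤ n * ε then 0 else 1) ≤
      ((n * ε) ^ 2)⁻¹ * ((∏ l, p (s l)) * (∑ i, g (s i)) ^ 2) := by
    intro s
    have hP : 0 ≤ ∏ l, p (s l) := Finset.prod_nonneg fun l _ => hp.1 _
    have hs : ∑ i, g (s i) = ∑ i, h (s i) - n * μ := by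
      simp [hgd, Finset.sum_sub_distrib]
    rw [hs]
    rw [mul_left_comm]
    apply mul_le_mul_of_nonneg_left _ hP
    split_ifs with hc
    · positivity
    · push Not at hc
      rw [← sq_abs (_ - _), inv_mul_eq_div, le_div_iff₀ (by positivity), one_mul]
      exact pow_le_pow_left₀ (by positivity) hc.le 2
  refine (Finset.sum_le_sum fun s _ => hb s).trans ?_
  rw [← Finset.mul_sum, second_moment p hp.2 g hg, ← hV]
  rw [div_le_iff₀ (by positivity)] at hn
  rw [inv_mul_eq_div, div_le_iff₀ (by positivity)]
  nlinarith

lemma exp_conv (x t : ℝ) (hx0 : 0 ≤ x) (hx1 : x ≤ 1) :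
    Real.exp (-(t * x)) ≤ 1 - x + Real.exp (-t) := by
  have h := convexOn_exp.2 (Set.mem_univ 0) (Set.mem_univ (-t)) (sub_nonneg.2 hx1) hx0 (by ring)
  simp only [smul_eq_mul, mul_zero, zero_add, Real.exp_zero, mul_one] at h
  rw [show -(t * x) = x * (-t) by ring]
  have := Real.exp_pos (-t)
  nlinarith

lemma condMI_eq {α β γ : Type} [Fintype α] [Fintype β] [Fintype γ] (p : α × β × γ → ℝ) :
    condMI p = ∑ t, p t * (Real.logb 2 (p t) + Real.logb 2 (∑ a, ∑ c, p (a, t.2.1, c))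
      - Real.logb 2 (∑ c, p (t.1, t.2.1, c)) - Real.logb 2 (∑ a, p (a, t.2.1, t.2.2))) := by
  unfold condMI H2
  simp_rw [mul_sub, mul_add, Finset.sum_sub_distrib, Finset.sum_add_distrib]
  simp_rw [Fintype.sum_prod_type, Finset.sum_mul]
  have e1 : ∑ x : α, ∑ y : β, ∑ z : γ, p (x, y, z) * Real.logb 2 (∑ a, p (a, y, z))
      = ∑ y : β, ∑ z : γ, ∑ x : α, p (x, y, z) * Real.logb 2 (∑ a, p (a, y, z)) := by
    rw [Finset.sum_comm]; refine Finset.sum_congr rfl fun y _ => ?_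
    rw [Finset.sum_comm]
  have e2 : ∑ x : α, ∑ y : β, ∑ z : γ, p (x, y, z) * Real.logb 2 (∑ a, ∑ c, p (a, y, c))
      = ∑ y : β, ∑ x : α, ∑ z : γ, p (x, y, z) * Real.logb 2 (∑ a, ∑ c, p (a, y, c)) := by
    rw [Finset.sum_comm]
  rw [e1, e2]
  ring

end TWR

namespace TWR

lemma exists_le_of_avg {ι : Type} [Fintype ι] (w F : ι → ℝ) (hw : ∀ i, 0 ≤ w i)
    (hs : ∑ i, w i = 1) (B : ℝ) (h : ∑ i, w i * F i ≤ B) : ∃ i, F i ≤ B := by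
  by_contra hc
  push Not at hc
  have h1 : ∑ i, w i * B < ∑ i, w i * F i := by
    apply Finset.sum_lt_sum
    · intro i _; exact mul_le_mul_of_nonneg_left (hc i).le (hw i)
    · by_contra h0
      push Not at h0
      have : ∀ i, w i = 0 := by
        intro i
        by_contra hi
        have hp : 0 < w i := lt_of_le_of_ne (hw i) (Ne.symm hi)
        have := h0 i (Finset.mem_univ i)
        nlinarith [hc i]
      simp [this] at hs
  rw [← Finset.sum_mul, hs, one_mul] at h1
  linarith

/-- Deterministic part: a codebook gives a code. -/
lemma codebook_code {X Y Z : Type} (A : X → Y → Z → Prop) (T1 : Y → Z → Prop) (T2 : X → Z → Prop)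
    (hA1 : ∀ x y z, A x y z → T1 y z) (hA2 : ∀ x y z, A x y z → T2 x z)
    (m L : ℕ) (hm : 0 < m) (C : Fin m × Fin L → Z) [Nonempty Z] :
    ∃ (f : X × Y → Fin m) (dec1 : Fin m × Y → Z) (dec2 : Fin m × X → Z),
      ∀ xy : X × Y, (¬ ∃ z, A xy.1 xy.2 z ∧ dec1 (f xy, xy.2) = z ∧ dec2 (f xy, xy.1) = z) →
        (∀ i, ¬ A xy.1 xy.2 (C i)) ∨
        (∃ j k k', k ≠ k' ∧ A xy.1 xy.2 (C (j, k)) ∧ T1 xy.2 (C (j, k'))) ∨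
        (∃ j k k', k ≠ k' ∧ A xy.1 xy.2 (C (j, k)) ∧ T2 xy.1 (C (j, k'))) := by
  have hf : ∀ xy : X × Y, ∃ j : Fin m, (∃ i, A xy.1 xy.2 (C i)) → ∃ k, A xy.1 xy.2 (C (j, k)) := by
    intro xy
    by_cases h : ∃ i, A xy.1 xy.2 (C i)
    · obtain ⟨⟨j, k⟩, hi⟩ := h
      exact ⟨j, fun _ => ⟨k, hi⟩⟩
    · exact ⟨⟨0, hm⟩, fun h' => absurd h' h⟩
  choose f hf using hf
  have hd1 : ∀ t : Fin m × Y, ∃ z : Z, (∃ k, T1 t.2 (C (t.1, k))) →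
      ∃ k, T1 t.2 (C (t.1, k)) ∧ z = C (t.1, k) := by
    intro t
    by_cases h : ∃ k, T1 t.2 (C (t.1, k))
    · obtain ⟨k, hk⟩ := h
      exact ⟨_, fun _ => ⟨k, hk, rfl⟩⟩
    · exact ⟨Classical.arbitrary Z, fun h' => absurd h' h⟩
  choose dec1 hd1 using hd1
  have hd2 : ∀ t : Fin m × X, ∃ z : Z, (∃ k, T2 t.2 (C (t.1, k))) →
      ∃ k, T2 t.2 (C (t.1, k)) ∧ z = C (t.1, k) := by
    intro t
    by_cases h : ∃ k, T2 t.2 (C (t.1, k))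
    · obtain ⟨k, hk⟩ := h
      exact ⟨_, fun _ => ⟨k, hk, rfl⟩⟩
    · exact ⟨Classical.arbitrary Z, fun h' => absurd h' h⟩
  choose dec2 hd2 using hd2
  refine ⟨f, dec1, dec2, ?_⟩
  intro xy hbad
  by_contra hc
  push Not at hc
  obtain ⟨hi, hc1, hc2⟩ := hc
  apply hbad
  obtain ⟨k, hk⟩ := hf xy hi
  obtain ⟨k1, hk1, e1⟩ := hd1 (f xy, xy.2) ⟨k, hA1 _ _ _ hk⟩
  obtain ⟨k2, hk2, e2⟩ := hd2 (f xy, xy.1) ⟨k, hA2 _ _ _ hk⟩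
  refine ⟨C (f xy, k), hk, ?_, ?_⟩
  · by_contra hne
    exact hc1 _ k k1 (fun h => hne (by rw [e1, h])) hk hk1
  · by_contra hne
    exact hc2 _ k k2 (fun h => hne (by rw [e2, h])) hk hk2

/-- number of failures: no codeword -/
def E0 {Z : Type} {m L : ℕ} (A : Z → Prop) (C : Fin m × Fin L → Z) : ℝ :=
  ∏ i, (if A (C i) then 0 else 1)

/-- number of colliding pairs -/
def E1 {Z : Type} {m L : ℕ} (A T : Z → Prop) (C : Fin m × Fin L → Z) : ℝ :=
  ∑ j, ∑ k, ∑ k', if k ≠ k' then (if A (C (j, k)) then (1 : ℝ) else 0) *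
    (if T (C (j, k')) then 1 else 0) else 0

lemma E0_nonneg {Z : Type} {m L : ℕ} (A : Z → Prop) (C : Fin m × Fin L → Z) : 0 ≤ E0 A C :=
  Finset.prod_nonneg fun i _ => by split_ifs <;> norm_num

lemma E1_nonneg {Z : Type} {m L : ℕ} (A T : Z → Prop) (C : Fin m × Fin L → Z) : 0 ≤ E1 A T C :=
  Finset.sum_nonneg fun i _ => Finset.sum_nonneg fun i _ => Finset.sum_nonneg fun i _ => by
    split_ifs <;> norm_num

lemma E1_ge {Z : Type} {m L : ℕ} (A T : Z → Prop) (C : Fin m × Fin L → Z)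
    (h : ∃ j k k', k ≠ k' ∧ A (C (j, k)) ∧ T (C (j, k'))) : 1 ≤ E1 A T C := by
  obtain ⟨j, k, k', hne, h1, h2⟩ := h
  unfold E1
  have nn : ∀ j k k', (0 : ℝ) ≤ if k ≠ k' then (if A (C (j, k)) then (1 : ℝ) else 0) *
    (if T (C (j, k')) then 1 else 0) else 0 := by
    intro j k k'; split_ifs <;> norm_num
  refine le_trans ?_ (Finset.single_le_sum (fun j _ => Finset.sum_nonneg fun k _ =>
    Finset.sum_nonneg fun k' _ => nn j k k') (Finset.mem_univ j))
  refine le_trans ?_ (Finset.single_le_sum (fun k _ =>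
    Finset.sum_nonneg fun k' _ => nn j k k') (Finset.mem_univ k))
  refine le_trans ?_ (Finset.single_le_sum (fun k' _ => nn j k k') (Finset.mem_univ k'))
  simp [hne, h1, h2]

lemma avg_E0 {Z : Type} [Fintype Z] (P K : Z → ℝ) (hP : IsPmf P) (hK : IsPmf K) (A : Z → Prop)
    (a : ℝ) (h1 : ∀ z, A z → a * K z ≤ P z) (m L : ℕ) :
    ∑ C : Fin m × Fin L → Z, (∏ i, P (C i)) * E0 A C ≤
      (∑ z, K z * (if A z then 0 else 1)) + Real.exp (-(a * (m * L))) := by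
  unfold E0
  simp_rw [← Finset.prod_mul_distrib]
  rw [sum_pi_prod (fun _ z => P z * (if A z then 0 else 1))]
  rw [Finset.prod_const, Finset.card_univ, Fintype.card_prod, Fintype.card_fin, Fintype.card_fin]
  set KA := ∑ z, K z * (if A z then 1 else 0) with hKA
  have e1 : ∑ z, P z * (if A z then 0 else 1) = 1 - ∑ z, P z * (if A z then 1 else 0) := by
    rw [eq_sub_iff_add_eq, ← Finset.sum_add_distrib]
    refine Eq.trans ?_ hP.2
    refine Finset.sum_congr rfl fun z _ => ?_
    split_ifs <;> ring
  have e2 : ∑ z, K z * (if A z then 0 else 1) = 1 - KA := by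
    rw [eq_sub_iff_add_eq, hKA, ← Finset.sum_add_distrib]
    refine Eq.trans ?_ hK.2
    refine Finset.sum_congr rfl fun z _ => ?_
    split_ifs <;> ring
  have e3 : a * KA ≤ ∑ z, P z * (if A z then 1 else 0) := by
    rw [hKA, Finset.mul_sum]
    refine Finset.sum_le_sum fun z _ => ?_
    split_ifs with h
    · simpa using h1 z h
    · simp
  have hnn : 0 ≤ ∑ z, P z * (if A z then 0 else 1) :=
    Finset.sum_nonneg fun z _ => mul_nonneg (hP.1 z) (by split_ifs <;> norm_num)
  have hK0 : 0 ≤ KA :=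
    Finset.sum_nonneg fun z _ => mul_nonneg (hK.1 z) (by split_ifs <;> norm_num)
  have hK1 : KA ≤ 1 := by
    rw [← hK.2]
    exact Finset.sum_le_sum fun z _ => by
      split_ifs
      · simp
      · simpa using hK.1 z
  have h5 : ∑ z, P z * (if A z then 0 else 1) ≤ Real.exp (-(a * KA)) := by
    rw [e1]
    have := Real.add_one_le_exp (-(a * KA))
    linarith
  calc (∑ z, P z * (if A z then 0 else 1)) ^ (m * L) ≤ Real.exp (-(a * KA)) ^ (m * L) :=
        pow_le_pow_left₀ hnn h5 _
    _ = Real.exp (-((a * (m * L)) * KA)) := by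
        rw [← Real.exp_nat_mul]; congr 1; push_cast; ring
    _ ≤ 1 - KA + Real.exp (-(a * (m * L))) := exp_conv _ _ hK0 hK1
    _ = _ := by rw [e2]

lemma avg_E1 {Z : Type} [Fintype Z] (P : Z → ℝ) (hP : IsPmf P) (A T : Z → Prop)
    (b c : ℝ) (hb : 0 ≤ b) (h2 : ∑ z, P z * (if A z then 1 else 0) ≤ b)
    (h3 : ∑ z, P z * (if T z then 1 else 0) ≤ c) (m L : ℕ) :
    ∑ C : Fin m × Fin L → Z, (∏ i, P (C i)) * E1 A T C ≤ m * (L * (L - 1)) * (b * c) := by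
  unfold E1
  simp_rw [Finset.mul_sum]
  rw [Finset.sum_comm]
  have key : ∀ j : Fin m, ∑ C : Fin m × Fin L → Z, ∑ k, ∑ k', (∏ i, P (C i)) *
      (if k ≠ k' then (if A (C (j, k)) then (1 : ℝ) else 0) *
        (if T (C (j, k')) then 1 else 0) else 0) ≤ (L * (L - 1)) * (b * c) := by
    intro j
    rw [Finset.sum_comm]
    have hk : ∀ k : Fin L, ∑ C : Fin m × Fin L → Z, ∑ k', (∏ i, P (C i)) *
      (if k ≠ k' then (if A (C (j, k)) then (1 : ℝ) else 0) *
        (if T (C (j, k')) then 1 else 0) else 0) ≤ (L - 1) * (b * c) := by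
      intro k
      rw [Finset.sum_comm]
      have hk' : ∀ k' : Fin L, ∑ C : Fin m × Fin L → Z, (∏ i, P (C i)) *
        (if k ≠ k' then (if A (C (j, k)) then (1 : ℝ) else 0) *
          (if T (C (j, k')) then 1 else 0) else 0) ≤ if k = k' then 0 else b * c := by
        intro k'
        by_cases hkk : k = k'
        · simp [hkk]
        · simp only [hkk, ne_eq, not_false_eq_true, if_true, if_false]
          rw [sum_pi_marg2 P hP.2 (fun z => if A z then (1 : ℝ) else 0)
            (fun z => if T z then (1 : ℝ) else 0) (j, k) (j, k') (by simp [hkk])]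
          refine mul_le_mul h2 h3 ?_ hb
          exact Finset.sum_nonneg fun z _ => mul_nonneg (hP.1 z) (by split_ifs <;> norm_num)
      refine (Finset.sum_le_sum fun k' _ => hk' k').trans ?_
      have : ∀ k' : Fin L, (if k = k' then 0 else b * c) = b * c - if k = k' then b * c else 0 := by
        intro k'; split_ifs <;> ring
      simp_rw [this, Finset.sum_sub_distrib]
      simp
      linarith
    refine (Finset.sum_le_sum fun k _ => hk k).trans ?_
    simp
    linarith
  refine (Finset.sum_le_sum fun j _ => key j).trans ?_
  simp
  linarith

theorem oneshot {X Y Z : Type} [Fintype X] [Fintype Y] [Fintype Z] [Nonempty Z]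
    (Q : X × Y → ℝ) (hQ : IsPmf Q) (K : X × Y → Z → ℝ) (hK : IsCondPmf K)
    (P : Z → ℝ) (hP : IsPmf P)
    (A : X → Y → Z → Prop) (T1 : Y → Z → Prop) (T2 : X → Z → Prop)
    (hA1 : ∀ x y z, A x y z → T1 y z) (hA2 : ∀ x y z, A x y z → T2 x z)
    (a b c : ℝ) (hb : 0 ≤ b)
    (h1 : ∀ x y z, A x y z → a * K (x, y) z ≤ P z)
    (h2 : ∀ x y, ∑ z, P z * (if A x y z then 1 else 0) ≤ b)
    (h3 : ∀ y, ∑ z, P z * (if T1 y z then 1 else 0) ≤ c)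
    (h4 : ∀ x, ∑ z, P z * (if T2 x z then 1 else 0) ≤ c)
    (m L : ℕ) (hm : 0 < m) :
    ∃ (f : X × Y → Fin m) (dec1 : Fin m × Y → Z) (dec2 : Fin m × X → Z),
      ∑ xy, Q xy *
        (if ∃ z, A xy.1 xy.2 z ∧ dec1 (f xy, xy.2) = z ∧ dec2 (f xy, xy.1) = z then 0 else 1) ≤
      ((∑ xy, ∑ z, Q xy * K xy z * (if A xy.1 xy.2 z then 0 else 1)) +
        Real.exp (-(a * (m * L)))) + 2 * (m * (L * (L - 1)) * (b * c)) := by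
  set B := ((∑ xy, ∑ z, Q xy * K xy z * (if A xy.1 xy.2 z then 0 else 1)) +
        Real.exp (-(a * (m * L)))) + 2 * (m * (L * (L - 1)) * (b * c)) with hB
  have hex : ∃ C : Fin m × Fin L → Z, ∑ xy : X × Y, Q xy *
      (E0 (A xy.1 xy.2) C + E1 (A xy.1 xy.2) (T1 xy.2) C + E1 (A xy.1 xy.2) (T2 xy.1) C) ≤ B := by
    apply exists_le_of_avg (fun C => ∏ i, P (C i)) _
      (fun C => Finset.prod_nonneg fun i _ => hP.1 _) (sum_pi_one P hP.2)
    simp_rw [Finset.mul_sum]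
    rw [Finset.sum_comm]
    have : ∀ xy : X × Y, ∑ C : Fin m × Fin L → Z, (∏ i, P (C i)) * (Q xy *
        (E0 (A xy.1 xy.2) C + E1 (A xy.1 xy.2) (T1 xy.2) C + E1 (A xy.1 xy.2) (T2 xy.1) C)) ≤
        Q xy * (((∑ z, K xy z * (if A xy.1 xy.2 z then 0 else 1)) +
          Real.exp (-(a * (m * L)))) + 2 * (m * (L * (L - 1)) * (b * c))) := by
      intro xy
      have e : ∀ C : Fin m × Fin L → Z, (∏ i, P (C i)) * (Q xy *
        (E0 (A xy.1 xy.2) C + E1 (A xy.1 xy.2) (T1 xy.2) C + E1 (A xy.1 xy.2) (T2 xy.1) C)) =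
        Q xy * ((∏ i, P (C i)) * E0 (A xy.1 xy.2) C +
        (∏ i, P (C i)) * E1 (A xy.1 xy.2) (T1 xy.2) C +
        (∏ i, P (C i)) * E1 (A xy.1 xy.2) (T2 xy.1) C) := by intro C; ring
      simp_rw [e]
      rw [← Finset.mul_sum]
      apply mul_le_mul_of_nonneg_left _ (hQ.1 xy)
      rw [Finset.sum_add_distrib, Finset.sum_add_distrib]
      have a0 := avg_E0 P (K xy) hP (hK xy) (A xy.1 xy.2) a (h1 xy.1 xy.2) m L
      have a1 := avg_E1 P hP (A xy.1 xy.2) (T1 xy.2) b c hb (h2 _ _) (h3 _) m L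
      have a2 := avg_E1 P hP (A xy.1 xy.2) (T2 xy.1) b c hb (h2 _ _) (h4 _) m L
      linarith
    refine (Finset.sum_le_sum fun xy _ => this xy).trans ?_
    rw [hB]
    simp_rw [mul_add, Finset.sum_add_distrib, ← Finset.sum_mul, hQ.2, Finset.mul_sum, mul_assoc]
    simp
  obtain ⟨C, hC⟩ := hex
  obtain ⟨f, dec1, dec2, hf⟩ := codebook_code A T1 T2 hA1 hA2 m L hm C
  refine ⟨f, dec1, dec2, le_trans (Finset.sum_le_sum fun xy _ => ?_) hC⟩
  apply mul_le_mul_of_nonneg_left _ (hQ.1 xy)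
  have n0 := E0_nonneg (A xy.1 xy.2) C
  have n1 := E1_nonneg (A xy.1 xy.2) (T1 xy.2) C
  have n2 := E1_nonneg (A xy.1 xy.2) (T2 xy.1) C
  split_ifs with hg
  · linarith
  · rcases hf xy hg with h | h | h
    · have : E0 (A xy.1 xy.2) C = 1 := by
        unfold E0; simp [h]
      linarith
    · have := E1_ge _ _ C h
      linarith
    · have := E1_ge _ _ C h
      linarith

end TWR

namespace TWR

set_option linter.unusedSectionVars false
section conv
variable {𝒳 𝒴 𝒵 : Type} [Fintype 𝒳] [Fintype 𝒴] [Fintype 𝒵]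

/-- Averaged single-letter law. -/
def pbar (q : 𝒳 × 𝒴 → ℝ) (n : ℕ) (ζ : (Fin n → 𝒳) × (Fin n → 𝒴) → Fin n → 𝒵)
    (t : 𝒳 × 𝒴 × 𝒵) : ℝ :=
  (n : ℝ)⁻¹ * ∑ i : Fin n, ∑ xy : (Fin n → 𝒳) × (Fin n → 𝒴),
    iid q n xy * (if (xy.1 i, xy.2 i, ζ xy i) = t then 1 else 0)

lemma iid_nonneg (q : 𝒳 × 𝒴 → ℝ) (hq : IsPmf q) (n : ℕ) (xy) : 0 ≤ iid q n xy :=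
  Finset.prod_nonneg fun _ _ => hq.1 _

lemma sum_pairs (n : ℕ) (F : (Fin n → 𝒳) × (Fin n → 𝒴) → ℝ) :
    ∑ xy, F xy = ∑ s : Fin n → 𝒳 × 𝒴, F (fun i => (s i).1, fun i => (s i).2) := by
  symm
  exact Fintype.sum_equiv (Equiv.arrowProdEquivProdArrow (Fin n) (fun _ => 𝒳) (fun _ => 𝒴)) _ _
    (fun s => rfl)

lemma iid_sum (q : 𝒳 × 𝒴 → ℝ) (hq : IsPmf q) (n : ℕ) : ∑ xy, iid q n xy = 1 := by
  rw [sum_pairs]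
  exact sum_pi_one q hq.2

lemma iid_marg (q : 𝒳 × 𝒴 → ℝ) (hq : IsPmf q) (n : ℕ) (i : Fin n) (u : 𝒳 × 𝒴 → ℝ) :
    ∑ xy, iid q n xy * u (xy.1 i, xy.2 i) = ∑ a, q a * u a := by
  rw [sum_pairs]
  exact sum_pi_marg q hq.2 u i

lemma pbar_nonneg (q : 𝒳 × 𝒴 → ℝ) (hq : IsPmf q) (n : ℕ)
    (ζ : (Fin n → 𝒳) × (Fin n → 𝒴) → Fin n → 𝒵) (t) : 0 ≤ pbar q n ζ t :=
  mul_nonneg (by positivity) (Finset.sum_nonneg fun i _ => Finset.sum_nonneg fun xy _ =>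
    mul_nonneg (iid_nonneg q hq n xy) (by split_ifs <;> norm_num))

lemma pbar_expect (q : 𝒳 × 𝒴 → ℝ) (n : ℕ)
    (ζ : (Fin n → 𝒳) × (Fin n → 𝒴) → Fin n → 𝒵) (φ : 𝒳 × 𝒴 × 𝒵 → ℝ) :
    ∑ t, pbar q n ζ t * φ t =
      (n : ℝ)⁻¹ * ∑ i : Fin n, ∑ xy, iid q n xy * φ (xy.1 i, xy.2 i, ζ xy i) := by
  unfold pbar
  simp_rw [mul_assoc, Finset.sum_mul]
  rw [← Finset.mul_sum, Finset.sum_comm]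
  congr 1
  refine Finset.sum_congr rfl fun i _ => ?_
  rw [Finset.sum_comm]
  refine Finset.sum_congr rfl fun xy _ => ?_
  simp_rw [mul_assoc]
  rw [← Finset.mul_sum]
  simp

lemma pbar_marg (q : 𝒳 × 𝒴 → ℝ) (hq : IsPmf q) (n : ℕ) (hn : 0 < n)
    (ζ : (Fin n → 𝒳) × (Fin n → 𝒴) → Fin n → 𝒵) (a : 𝒳) (b : 𝒴) :
    ∑ c, pbar q n ζ (a, b, c) = q (a, b) := by
  have h := pbar_expect q n ζ (fun t => if (t.1, t.2.1) = (a, b) then 1 else 0)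
  have e : ∑ t, pbar q n ζ t * (if (t.1, t.2.1) = (a, b) then 1 else 0)
      = ∑ c, pbar q n ζ (a, b, c) := by
    simp_rw [Fintype.sum_prod_type]
    rw [Finset.sum_eq_single a, Finset.sum_eq_single b]
    · simp
    · intro y _ hy; simp [hy]
    · simp
    · intro x _ hx; simp [hx]
    · simp
  rw [e] at h
  rw [h]
  have : ∀ i : Fin n, ∑ xy : (Fin n → 𝒳) × (Fin n → 𝒴),
      iid q n xy * (if (xy.1 i, xy.2 i) = (a, b) then 1 else 0) = q (a, b) := by
    intro i
    rw [iid_marg q hq n i (fun s => if s = (a, b) then 1 else 0)]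
    simp
  simp only [this]
  have : (n : ℝ) ≠ 0 := by positivity
  simp [this]

lemma pbar_pos (q : 𝒳 × 𝒴 → ℝ) (hq : IsPmf q) (n : ℕ)
    (ζ : (Fin n → 𝒳) × (Fin n → 𝒴) → Fin n → 𝒵) (xy) (h : 0 < iid q n xy) (i : Fin n) :
    0 < pbar q n ζ (xy.1 i, xy.2 i, ζ xy i) := by
  have hn : 0 < n := i.pos
  unfold pbar
  apply mul_pos (by positivity)
  have nn : ∀ (j : Fin n) (xy' : (Fin n → 𝒳) × (Fin n → 𝒴)), 0 ≤ iid q n xy' *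
    (if (xy'.1 j, xy'.2 j, ζ xy' j) = (xy.1 i, xy.2 i, ζ xy i) then 1 else 0) := fun j xy' =>
    mul_nonneg (iid_nonneg q hq n xy') (by split_ifs <;> norm_num)
  apply Finset.sum_pos' (fun j _ => Finset.sum_nonneg fun xy' _ => nn j xy')
  refine ⟨i, Finset.mem_univ _, Finset.sum_pos' (fun xy' _ => nn i xy') ⟨xy, Finset.mem_univ _, ?_⟩⟩
  simpa using h

lemma logb_le_lin (g M : ℝ) (hg : 0 < g) (hM : 0 < M) :
    Real.logb 2 g ≤ Real.logb 2 M + (g / M - 1) / Real.log 2 := by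
  have h2 : 0 < Real.log 2 := Real.log_pos (by norm_num)
  have := Real.log_le_sub_one_of_pos (div_pos hg hM)
  rw [Real.log_div hg.ne' hM.ne'] at this
  unfold Real.logb
  rw [← add_div, div_le_div_iff_of_pos_right h2]
  linarith

set_option maxHeartbeats 1000000 in
lemma pbar_condMI (q : 𝒳 × 𝒴 → ℝ) (hq : IsPmf q) (n : ℕ) (hn : 0 < n) (m : ℕ) (hm : 0 < m)
    (f : (Fin n → 𝒳) × (Fin n → 𝒴) → Fin m) (dec : Fin m × (Fin n → 𝒴) → Fin n → 𝒵) :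
    condMI (pbar q n (fun xy => dec (f xy, xy.2))) ≤ Real.logb 2 m / n := by
  set ζ : (Fin n → 𝒳) × (Fin n → 𝒴) → Fin n → 𝒵 := fun xy => dec (f xy, xy.2) with hζ
  set p := pbar q n ζ with hp
  have hp0 : ∀ t, 0 ≤ p t := pbar_nonneg q hq n ζ
  have hn' : (0 : ℝ) < n := by exact_mod_cast hn
  have hm' : (0 : ℝ) < m := by exact_mod_cast hm
  set pB : 𝒴 → ℝ := fun b => ∑ a, q (a, b) with hpB
  set pBC : 𝒴 → 𝒵 → ℝ := fun b c => ∑ a, p (a, b, c) with hpBC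
  have hpB0 : ∀ b, 0 ≤ pB b := fun b => Finset.sum_nonneg fun a _ => hq.1 _
  have hpBC0 : ∀ b c, 0 ≤ pBC b c := fun b c => Finset.sum_nonneg fun a _ => hp0 _
  set ρ : 𝒳 × 𝒴 × 𝒵 → ℝ := fun t => p t * pB t.2.1 / (q (t.1, t.2.1) * pBC t.2.1 t.2.2) with hρ
  have hρ0 : ∀ t, 0 ≤ ρ t := fun t =>
    div_nonneg (mul_nonneg (hp0 _) (hpB0 _)) (mul_nonneg (hq.1 _) (hpBC0 _ _))
  have hmarg : ∀ a b, ∑ c, p (a, b, c) = q (a, b) := pbar_marg q hq n hn ζ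
  have hpq : ∀ t, p t ≤ q (t.1, t.2.1) := by
    rintro ⟨a, b, c⟩
    rw [← hmarg]
    exact Finset.single_le_sum (f := fun c => p (a, b, c)) (fun c _ => hp0 _) (Finset.mem_univ c)
  have hpbc : ∀ t, p t ≤ pBC t.2.1 t.2.2 := by
    rintro ⟨a, b, c⟩
    exact Finset.single_le_sum (f := fun a => p (a, b, c)) (fun c _ => hp0 _) (Finset.mem_univ a)
  have hqB : ∀ a b, q (a, b) ≤ pB b := fun a b =>
    Finset.single_le_sum (f := fun a => q (a, b)) (fun c _ => hq.1 _) (Finset.mem_univ a)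
  -- rewrite
  rw [condMI_eq]
  have e1 : ∀ t : 𝒳 × 𝒴 × 𝒵, p t * (Real.logb 2 (p t) + Real.logb 2 (∑ a, ∑ c, p (a, t.2.1, c))
      - Real.logb 2 (∑ c, p (t.1, t.2.1, c)) - Real.logb 2 (∑ a, p (a, t.2.1, t.2.2)))
      = p t * Real.logb 2 (ρ t) := by
    intro t
    rcases (hp0 t).eq_or_lt with h | h
    · rw [← h]; simp
    · have a1 := h.trans_le (hpq t)
      have a2 := h.trans_le (hpbc t)
      have a3 := a1.trans_le (hqB _ _)
      congr 1
      simp only [hρ]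
      rw [Real.logb_div (mul_pos h a3).ne' (mul_pos a1 a2).ne', Real.logb_mul h.ne' a3.ne',
        Real.logb_mul a1.ne' a2.ne']
      simp only [hmarg, hpB, hpBC]
      ring
  simp_rw [e1]
  rw [hp, pbar_expect, Finset.sum_comm]
  simp_rw [← Finset.mul_sum]
  rw [inv_mul_eq_div, div_le_div_iff_of_pos_right hn']
  have h2 : 0 < Real.log 2 := Real.log_pos (by norm_num)
  set G : (Fin n → 𝒳) × (Fin n → 𝒴) → ℝ := fun xy => ∏ i, ρ (xy.1 i, xy.2 i, ζ xy i) with hG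
  have hterm : ∀ xy : (Fin n → 𝒳) × (Fin n → 𝒴),
      iid q n xy * ∑ i, Real.logb 2 (ρ (xy.1 i, xy.2 i, ζ xy i)) ≤
      iid q n xy * (Real.logb 2 m + (G xy / m - 1) / Real.log 2) := by
    intro xy
    rcases (iid_nonneg q hq n xy).eq_or_lt with h | h
    · rw [← h]; simp
    · apply mul_le_mul_of_nonneg_left _ h.le
      have hpos : ∀ i, 0 < ρ (xy.1 i, xy.2 i, ζ xy i) := by
        intro i
        have h0 := pbar_pos q hq n ζ xy h i
        rw [← hp] at h0
        have a1 := h0.trans_le (hpq _)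
        have a2 := h0.trans_le (hpbc _)
        have a3 := a1.trans_le (hqB _ _)
        exact div_pos (mul_pos h0 a3) (mul_pos a1 a2)
      rw [← Real.logb_prod _ _ (fun i _ => (hpos i).ne')]
      exact logb_le_lin _ _ (Finset.prod_pos fun i _ => hpos i) hm'
  refine (Finset.sum_le_sum fun xy _ => hterm xy).trans ?_
  -- bound on expectation of G
  have hρsum : ∀ b c, ∑ a, q (a, b) * ρ (a, b, c) ≤ pB b := by
    intro b c
    have : ∀ a, q (a, b) * ρ (a, b, c) ≤ p (a, b, c) * (pB b / pBC b c) := by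
      intro a
      rcases (hq.1 (a, b)).eq_or_lt with h | h
      · rw [← h, zero_mul]
        exact mul_nonneg (hp0 _) (div_nonneg (hpB0 _) (hpBC0 _ _))
      · simp only [hρ]
        apply le_of_eq
        rw [mul_div_assoc', mul_div_mul_left _ _ h.ne', mul_div_assoc]
    refine (Finset.sum_le_sum fun a _ => this a).trans ?_
    rw [← Finset.sum_mul]
    change pBC b c * _ ≤ _
    rcases (hpBC0 b c).eq_or_lt with h | h
    · rw [← h]; simpa using hpB0 b
    · rw [mul_div_cancel₀ _ h.ne']
  have hEG : ∑ xy, iid q n xy * G xy ≤ m := by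
    have s1 : ∀ xy : (Fin n → 𝒳) × (Fin n → 𝒴), iid q n xy * G xy ≤
        ∑ j : Fin m, ∏ i, (q (xy.1 i, xy.2 i) * ρ (xy.1 i, xy.2 i, dec (j, xy.2) i)) := by
      intro xy
      have : iid q n xy * G xy =
          ∏ i, (q (xy.1 i, xy.2 i) * ρ (xy.1 i, xy.2 i, dec (f xy, xy.2) i)) := by
        rw [Finset.prod_mul_distrib]; rfl
      rw [this]
      exact Finset.single_le_sum (f := fun j : Fin m =>
        ∏ i, (q (xy.1 i, xy.2 i) * ρ (xy.1 i, xy.2 i, dec (j, xy.2) i)))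
        (fun j _ => Finset.prod_nonneg fun i _ => mul_nonneg (hq.1 _) (hρ0 _)) (Finset.mem_univ (f xy))
    refine (Finset.sum_le_sum fun xy _ => s1 xy).trans ?_
    rw [Finset.sum_comm]
    have s2 : ∀ j : Fin m, ∑ xy : (Fin n → 𝒳) × (Fin n → 𝒴),
        ∏ i, (q (xy.1 i, xy.2 i) * ρ (xy.1 i, xy.2 i, dec (j, xy.2) i)) ≤ 1 := by
      intro j
      rw [Fintype.sum_prod_type_right]
      have s3 : ∀ y : Fin n → 𝒴, ∑ x : Fin n → 𝒳,
          ∏ i, (q (x i, y i) * ρ (x i, y i, dec (j, y) i)) ≤ ∏ i, pB (y i) := by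
        intro y
        rw [sum_pi_prod (fun i a => q (a, y i) * ρ (a, y i, dec (j, y) i))]
        exact Finset.prod_le_prod (fun i _ => Finset.sum_nonneg fun a _ =>
          mul_nonneg (hq.1 _) (hρ0 _)) (fun i _ => hρsum _ _)
      refine (Finset.sum_le_sum fun y _ => s3 y).trans (le_of_eq ?_)
      apply sum_pi_one
      rw [← hq.2, Fintype.sum_prod_type_right]
    refine (Finset.sum_le_sum fun j _ => s2 j).trans ?_
    simp
  have e3 : ∑ xy, iid q n xy * (Real.logb 2 m + (G xy / m - 1) / Real.log 2) =
      Real.logb 2 m + ((∑ xy, iid q n xy * G xy) / m - 1) / Real.log 2 := by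
    have : ∀ xy, iid q n xy * (Real.logb 2 m + (G xy / m - 1) / Real.log 2) =
      iid q n xy * (Real.logb 2 m - 1 / Real.log 2) + iid q n xy * G xy * (1 / m / Real.log 2) := by
      intro xy; ring
    simp_rw [this]
    rw [Finset.sum_add_distrib, ← Finset.sum_mul, ← Finset.sum_mul, iid_sum q hq]
    ring
  rw [e3]
  have : ((∑ xy, iid q n xy * G xy) / m - 1) / Real.log 2 ≤ 0 := by
    apply div_nonpos_of_nonpos_of_nonneg _ h2.le
    rw [sub_nonpos, div_le_one hm']
    exact hEG
  linarith

lemma condMI_nonneg {α β γ : Type} [Fintype α] [Fintype β] [Fintype γ] (p : α × β × γ → ℝ)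
    (hp : IsPmf p) : 0 ≤ condMI p := by
  rw [condMI_eq]
  have h2 : 0 < Real.log 2 := Real.log_pos (by norm_num)
  set pB : β → ℝ := fun b => ∑ a, ∑ c, p (a, b, c) with hpB
  set pAB : α → β → ℝ := fun a b => ∑ c, p (a, b, c) with hpAB
  set pBC : β → γ → ℝ := fun b c => ∑ a, p (a, b, c) with hpBC
  have hAB0 : ∀ a b, 0 ≤ pAB a b := fun a b => Finset.sum_nonneg fun c _ => hp.1 _
  have hBC0 : ∀ b c, 0 ≤ pBC b c := fun b c => Finset.sum_nonneg fun a _ => hp.1 _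
  have hB0 : ∀ b, 0 ≤ pB b := fun b => Finset.sum_nonneg fun a _ => hAB0 a b
  have h1 : ∀ t : α × β × γ, (p t - pAB t.1 t.2.1 * pBC t.2.1 t.2.2 / pB t.2.1) / Real.log 2 ≤
      p t * (Real.logb 2 (p t) + Real.logb 2 (pB t.2.1)
      - Real.logb 2 (pAB t.1 t.2.1) - Real.logb 2 (pBC t.2.1 t.2.2)) := by
    rintro ⟨a, b, c⟩
    simp only
    rcases (hp.1 (a, b, c)).eq_or_lt with h | h
    · rw [← h]
      simp only [zero_mul, zero_sub]
      apply div_nonpos_of_nonpos_of_nonneg _ h2.le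
      rw [neg_nonpos]
      exact div_nonneg (mul_nonneg (hAB0 _ _) (hBC0 _ _)) (hB0 _)
    · have a1 : 0 < pAB a b := h.trans_le (Finset.single_le_sum (f := fun c => p (a, b, c))
        (fun c _ => hp.1 _) (Finset.mem_univ c))
      have a2 : 0 < pBC b c := h.trans_le (Finset.single_le_sum (f := fun a => p (a, b, c))
        (fun c _ => hp.1 _) (Finset.mem_univ a))
      have a3 : 0 < pB b := a1.trans_le (Finset.single_le_sum (f := fun a => pAB a b)
        (fun c _ => hAB0 _ _) (Finset.mem_univ a))
      have := logb_le_lin (pAB a b * pBC b c) (p (a, b, c) * pB b) (by positivity) (by positivity)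
      rw [Real.logb_mul a1.ne' a2.ne', Real.logb_mul h.ne' a3.ne'] at this
      have e : (p (a, b, c) - pAB a b * pBC b c / pB b) / Real.log 2 =
        p (a, b, c) * (-((pAB a b * pBC b c / (p (a, b, c) * pB b) - 1) / Real.log 2)) := by
        field_simp
        ring
      rw [e]
      apply mul_le_mul_of_nonneg_left _ h.le
      linarith
  refine le_trans ?_ (Finset.sum_le_sum fun t _ => h1 t)
  rw [← Finset.sum_div]
  apply div_nonneg _ h2.le
  rw [Finset.sum_sub_distrib, hp.2, sub_nonneg]
  have h3 : ∑ t : α × β × γ, pAB t.1 t.2.1 * pBC t.2.1 t.2.2 / pB t.2.1 =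
      ∑ b, pB b * pB b / pB b := by
    simp_rw [Fintype.sum_prod_type]
    rw [Finset.sum_comm]
    refine Finset.sum_congr rfl fun b _ => ?_
    simp_rw [← Finset.sum_div, ← Finset.mul_sum]
    rw [← Finset.sum_mul]
    congr 2
    simp only [hpBC, hpB]
    rw [Finset.sum_comm]
  rw [h3]
  have h4 : ∑ b, pB b = 1 := by
    rw [← hp.2]
    simp_rw [Fintype.sum_prod_type, hpB]
    rw [Finset.sum_comm]
  rw [← h4]
  refine Finset.sum_le_sum fun b _ => ?_
  rw [mul_self_div_self]

lemma pbar_swap (q : 𝒳 × 𝒴 → ℝ) (n : ℕ) (ζ : (Fin n → 𝒳) × (Fin n → 𝒴) → Fin n → 𝒵) :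
    (fun t : 𝒴 × 𝒳 × 𝒵 => pbar q n ζ (t.2.1, t.1, t.2.2)) =
      pbar (swap q) n (fun yx => ζ (yx.2, yx.1)) := by
  funext t
  unfold pbar
  congr 1
  refine Finset.sum_congr rfl fun i _ => ?_
  refine Fintype.sum_equiv (Equiv.prodComm _ _) _ _ fun xy => ?_
  obtain ⟨a, b, c⟩ := t
  simp only [iid, swap, Equiv.prodComm_apply, Prod.fst_swap, Prod.snd_swap, Prod.mk.injEq]
  congr 1
  simp only [← and_assoc, and_comm (a := xy.1 i = b)]

lemma swap_pmf (q : 𝒳 × 𝒴 → ℝ) (hq : IsPmf q) : IsPmf (swap q) := by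
  refine ⟨fun t => hq.1 _, ?_⟩
  rw [← hq.2]
  exact Fintype.sum_equiv (Equiv.prodComm _ _) _ _ fun xy => rfl

lemma pbar_dist (q : 𝒳 × 𝒴 → ℝ) (hq : IsPmf q) (n : ℕ) (hn : 0 < n)
    (ζ ζ' : (Fin n → 𝒳) × (Fin n → 𝒴) → Fin n → 𝒵) (t) :
    |pbar q n ζ t - pbar q n ζ' t| ≤ ∑ xy, if ζ xy = ζ' xy then 0 else iid q n xy := by
  have hn' : (0 : ℝ) < n := by exact_mod_cast hn
  unfold pbar
  rw [← mul_sub, ← Finset.sum_sub_distrib, abs_mul, abs_of_nonneg (by positivity),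
    inv_mul_le_iff₀ hn']
  refine (Finset.abs_sum_le_sum_abs _ _).trans ?_
  have : ∀ i : Fin n, |∑ xy : (Fin n → 𝒳) × (Fin n → 𝒴), iid q n xy *
      (if (xy.1 i, xy.2 i, ζ xy i) = t then 1 else 0) -
      ∑ xy : (Fin n → 𝒳) × (Fin n → 𝒴), iid q n xy *
      (if (xy.1 i, xy.2 i, ζ' xy i) = t then 1 else 0)| ≤
      ∑ xy, if ζ xy = ζ' xy then 0 else iid q n xy := by
    intro i
    rw [← Finset.sum_sub_distrib]
    refine (Finset.abs_sum_le_sum_abs _ _).trans (Finset.sum_le_sum fun xy _ => ?_)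
    have := iid_nonneg q hq n xy
    split_ifs with h1 h2 h3 h4 <;> simp_all [abs_of_nonneg]
  refine (Finset.sum_le_sum fun i _ => this i).trans ?_
  simp

end conv
end TWR

namespace TWR

lemma H2_cont {α β : Type} [Fintype α] [TopologicalSpace β] (F : β → α → ℝ)
    (hF : ∀ a, Continuous fun b => F b a) : Continuous fun b => H2 (F b) := by
  unfold H2
  refine Continuous.neg (continuous_finsetSum _ fun a _ => ?_)
  have : (fun b => F b a * Real.logb 2 (F b a)) =
      fun b => (F b a * Real.log (F b a)) / Real.log 2 := by
    funext b; unfold Real.logb; ring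
  rw [this]
  exact (Real.continuous_mul_log.comp (hF a)).div_const _

lemma condMI_cont {α β γ : Type} [Fintype α] [Fintype β] [Fintype γ] :
    Continuous (condMI : (α × β × γ → ℝ) → ℝ) := by
  unfold condMI
  refine ((Continuous.add ?_ ?_).sub ?_).sub ?_
  · exact H2_cont (fun (p : α × β × γ → ℝ) (ab : α × β) => ∑ c, p (ab.1, ab.2, c))
      (fun a => by fun_prop)
  · exact H2_cont (fun (p : α × β × γ → ℝ) (bc : β × γ) => ∑ a, p (a, bc.1, bc.2))
      (fun a => by fun_prop)
  · exact H2_cont (fun (p : α × β × γ → ℝ) => p) (fun a => by fun_prop)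
  · exact H2_cont (fun (p : α × β × γ → ℝ) (b : β) => ∑ a, ∑ c, p (a, b, c))
      (fun a => by fun_prop)

variable {𝒳 𝒴 Xh Yh : Type} [Fintype 𝒳] [Fintype 𝒴] [Fintype Xh] [Fintype Yh]

lemma converse_step (q : 𝒳 × 𝒴 → ℝ) (hq : IsPmf q)
    (δ1 : 𝒳 → Xh → ℝ) (δ2 : 𝒴 → Yh → ℝ) (d1 d2 r : ℝ)
    (h : CRAchievable q δ1 δ2 d1 d2 r) (ε : ℝ) (hε : 0 < ε) :
    ∃ p1 p2 : 𝒳 × 𝒴 × (Xh × Yh) → ℝ, (∀ t, 0 ≤ p1 t) ∧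
      (∀ a b, ∑ c, p1 (a, b, c) = q (a, b)) ∧
      (∀ t, |p1 t - p2 t| ≤ 2 * ε) ∧ condMI p1 ≤ r + ε ∧
      condMI (fun t : 𝒴 × 𝒳 × (Xh × Yh) => p2 (t.2.1, t.1, t.2.2)) ≤ r + ε ∧
      ∑ t, p1 t * δ1 t.1 t.2.2.1 ≤ d1 + ε ∧ ∑ t, p2 t * δ2 t.2.1 t.2.2.2 ≤ d2 + ε := by
  obtain ⟨n, m, f, g1, g2, φ1, φ2, hn, hR, hD1, hD2, hP1, hP2⟩ := h ε hε
  have hne : Nonempty ((Fin n → 𝒳) × (Fin n → 𝒴)) := by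
    by_contra hcon
    rw [not_nonempty_iff] at hcon
    have := iid_sum q hq n
    simp at this
  have hm : 0 < m := (f hne.some).pos
  set ζ1 : (Fin n → 𝒳) × (Fin n → 𝒴) → Fin n → Xh × Yh :=
    fun xy => (fun t : Fin m × (Fin n → 𝒴) => fun i => (g1 t i, φ1 t i)) (f xy, xy.2) with hζ1
  set ζ2 : (Fin n → 𝒳) × (Fin n → 𝒴) → Fin n → Xh × Yh :=
    fun xy => (fun t : Fin m × (Fin n → 𝒳) => fun i => (φ2 t i, g2 t i)) (f xy, xy.1) with hζ2
  refine ⟨pbar q n ζ1, pbar q n ζ2, pbar_nonneg q hq n ζ1, pbar_marg q hq n hn ζ1, ?_, ?_, ?_, ?_, ?_⟩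
  · intro t
    refine (pbar_dist q hq n hn ζ1 ζ2 t).trans ?_
    rw [two_mul]
    refine le_trans ?_ (add_le_add hP1 hP2)
    rw [← Finset.sum_add_distrib]
    refine Finset.sum_le_sum fun xy _ => ?_
    have h0 := iid_nonneg q hq n xy
    by_cases ha : φ2 (f xy, xy.1) = g1 (f xy, xy.2)
    · by_cases hb : φ1 (f xy, xy.2) = g2 (f xy, xy.1)
      · have : ζ1 xy = ζ2 xy := by
          funext i; simp only [hζ1, hζ2, ha, hb]
        simp [this, ha, hb]
      · simp only [ha, hb, if_true, if_false]
        split_ifs <;> linarith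
    · simp only [ha, if_false]
      split_ifs <;> linarith
  · exact (pbar_condMI q hq n hn m hm f (fun t i => (g1 t i, φ1 t i))).trans hR
  · rw [pbar_swap]
    have := pbar_condMI (swap q) (swap_pmf q hq) n hn m hm (fun yx => f (yx.2, yx.1))
      (fun t i => (φ2 t i, g2 t i))
    exact this.trans hR
  · rw [pbar_expect q n ζ1 (fun t => δ1 t.1 t.2.2.1)]
    refine le_trans (le_of_eq ?_) hD1
    unfold Delta1
    rw [Finset.sum_comm, Finset.mul_sum]
    refine Finset.sum_congr rfl fun xy _ => ?_
    rw [← Finset.mul_sum]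
    simp only [hζ1]
    ring
  · rw [pbar_expect q n ζ2 (fun t => δ2 t.2.1 t.2.2.2)]
    refine le_trans (le_of_eq ?_) hD2
    unfold Delta2
    rw [Finset.sum_comm, Finset.mul_sum]
    refine Finset.sum_congr rfl fun xy _ => ?_
    rw [← Finset.mul_sum]
    simp only [hζ2]
    ring

lemma sum_regroup (F : 𝒳 → 𝒴 → Xh × Yh → ℝ) :
    ∑ x, ∑ y, ∑ z : Xh × Yh, F x y z = ∑ t : 𝒳 × 𝒴 × (Xh × Yh), F t.1 t.2.1 t.2.2 := by
  rw [Fintype.sum_prod_type]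
  refine Finset.sum_congr rfl fun x _ => ?_
  rw [Fintype.sum_prod_type]

theorem converse (q : 𝒳 × 𝒴 → ℝ) (hq : IsPmf q) (hne : Nonempty (Xh × Yh))
    (δ1 : 𝒳 → Xh → ℝ) (δ2 : 𝒴 → Yh → ℝ) (d1 d2 r : ℝ)
    (h : CRAchievable q δ1 δ2 d1 d2 r) : ∃ r' ∈ crFormulaSet q δ1 δ2 d1 d2, r' ≤ r := by
  have hstep := fun k : ℕ => converse_step q hq δ1 δ2 d1 d2 r h (1 / ((k : ℝ) + 1))
    Nat.one_div_pos_of_nat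
  choose p1 p2 h0 hmarg hdist hI1 hI2 hd1 hd2 using hstep
  have hmem : ∀ k, p1 k ∈ stdSimplex ℝ (𝒳 × 𝒴 × (Xh × Yh)) := by
    intro k
    refine ⟨h0 k, ?_⟩
    rw [Fintype.sum_prod_type, ← hq.2, Fintype.sum_prod_type]
    refine Finset.sum_congr rfl fun x _ => ?_
    rw [Fintype.sum_prod_type]
    refine Finset.sum_congr rfl fun y _ => hmarg k x y
  obtain ⟨p, hp, φ, hφ, hlim⟩ := (isCompact_stdSimplex ℝ (𝒳 × 𝒴 × (Xh × Yh))).tendsto_subseq hmem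
  have hε : Filter.Tendsto (fun k : ℕ => 1 / (((φ k : ℕ) : ℝ) + 1)) Filter.atTop (nhds 0) :=
    tendsto_one_div_add_atTop_nhds_zero_nat.comp hφ.tendsto_atTop
  have hlim2 : Filter.Tendsto (p2 ∘ φ) Filter.atTop (nhds p) := by
    rw [tendsto_pi_nhds] at hlim ⊢
    intro t
    have hz : Filter.Tendsto (fun k => p1 (φ k) t - p2 (φ k) t) Filter.atTop (nhds 0) := by
      apply squeeze_zero_norm (a := fun k : ℕ => 2 * (1 / (((φ k : ℕ) : ℝ) + 1)))
      · intro k; exact hdist (φ k) t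
      · simpa using hε.const_mul 2
    have := (hlim t).sub hz
    simpa using this
  have hmp : ∀ a b, ∑ c, p (a, b, c) = q (a, b) := by
    intro a b
    have hc : Continuous fun p : 𝒳 × 𝒴 × (Xh × Yh) → ℝ => ∑ c, p (a, b, c) := by fun_prop
    refine tendsto_nhds_unique ((hc.tendsto p).comp hlim) ?_
    have : ((fun p : 𝒳 × 𝒴 × (Xh × Yh) → ℝ => ∑ c, p (a, b, c)) ∘ p1 ∘ φ) = fun _ => q (a, b) := by
      funext k; exact hmarg _ a b
    rw [this]; exact tendsto_const_nhds
  have lim_le : ∀ (Φ : (𝒳 × 𝒴 × (Xh × Yh) → ℝ) → ℝ) (hΦ : Continuous Φ)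
      (s : ℕ → 𝒳 × 𝒴 × (Xh × Yh) → ℝ) (hs : Filter.Tendsto (s ∘ φ) Filter.atTop (nhds p)) (d : ℝ)
      (hd : ∀ k : ℕ, Φ (s k) ≤ d + 1 / ((k : ℝ) + 1)), Φ p ≤ d := by
    intro Φ hΦ s hs d hd
    have h2 : Filter.Tendsto (fun k : ℕ => d + 1 / (((φ k : ℕ) : ℝ) + 1)) Filter.atTop (nhds d) := by
      simpa using hε.const_add d
    exact le_of_tendsto_of_tendsto' ((hΦ.tendsto p).comp hs) h2 (fun k => hd (φ k))
  have c1 := lim_le condMI condMI_cont p1 hlim r hI1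
  have c2 := lim_le (fun p => condMI (fun t : 𝒴 × 𝒳 × (Xh × Yh) => p (t.2.1, t.1, t.2.2)))
    (condMI_cont.comp (by fun_prop)) p2 hlim2 r hI2
  have c3 := lim_le (fun p => ∑ t, p t * δ1 t.1 t.2.2.1) (by fun_prop) p1 hlim d1 hd1
  have c4 := lim_le (fun p => ∑ t, p t * δ2 t.2.1 t.2.2.2) (by fun_prop) p2 hlim2 d2 hd2
  set z0 := hne.some
  set W : 𝒳 × 𝒴 → Xh × Yh → ℝ := fun xy z =>
    if q xy = 0 then (if z = z0 then 1 else 0) else p (xy.1, xy.2, z) / q xy with hW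
  have hqW : ∀ x y z, q (x, y) * W (x, y) z = p (x, y, z) := by
    intro x y z
    simp only [hW]
    by_cases hz : q (x, y) = 0
    · have := hmp x y
      rw [hz, Finset.sum_eq_zero_iff_of_nonneg (fun c _ => hp.1 _)] at this
      rw [hz, zero_mul, this z (Finset.mem_univ z)]
    · rw [if_neg hz]; field_simp
  refine ⟨_, ⟨W, ?_, ?_, ?_, rfl⟩, ?_⟩
  · rintro ⟨x, y⟩
    by_cases hz : q (x, y) = 0
    · simp only [hW, hz, if_true]
      exact ⟨fun z => by dsimp only; split_ifs <;> norm_num, by simp⟩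
    · simp only [hW, hz, if_false]
      refine ⟨fun z => div_nonneg (hp.1 _) (hq.1 _), ?_⟩
      rw [← Finset.sum_div, hmp, div_self hz]
  · simp_rw [hqW]
    rw [sum_regroup (fun x y z => p (x, y, z) * δ1 x z.1)]
    exact c3
  · simp_rw [hqW]
    rw [sum_regroup (fun x y z => p (x, y, z) * δ2 y z.2)]
    exact c4
  · simp_rw [hqW]
    exact max_le c1 c2

end TWR

namespace TWR

section ach
variable {𝒳 𝒴 𝒵 : Type} [Fintype 𝒳] [Fintype 𝒴] [Fintype 𝒵]

/-- joint law -/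
def pJ (q : 𝒳 × 𝒴 → ℝ) (W : 𝒳 × 𝒴 → 𝒵 → ℝ) (t : 𝒳 × 𝒴 × 𝒵) : ℝ :=
  q (t.1, t.2.1) * W (t.1, t.2.1) t.2.2

/-- output law -/
def pZ (q : 𝒳 × 𝒴 → ℝ) (W : 𝒳 × 𝒴 → 𝒵 → ℝ) (c : 𝒵) : ℝ := ∑ a, ∑ b, pJ q W (a, b, c)

/-- conditional law of the output given `Y` -/
def K1 (q : 𝒳 × 𝒴 → ℝ) (W : 𝒳 × 𝒴 → 𝒵 → ℝ) (b : 𝒴) (c : 𝒵) : ℝ :=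
  (∑ a, pJ q W (a, b, c)) / ∑ a, q (a, b)

/-- conditional law of the output given `X` -/
def K2 (q : 𝒳 × 𝒴 → ℝ) (W : 𝒳 × 𝒴 → 𝒵 → ℝ) (a : 𝒳) (c : 𝒵) : ℝ :=
  (∑ b, pJ q W (a, b, c)) / ∑ b, q (a, b)

lemma pJ_nonneg (q : 𝒳 × 𝒴 → ℝ) (hq : IsPmf q) (W : 𝒳 × 𝒴 → 𝒵 → ℝ) (hW : IsCondPmf W) (t) :
    0 ≤ pJ q W t := mul_nonneg (hq.1 _) ((hW _).1 _)

lemma pJ_marg (q : 𝒳 × 𝒴 → ℝ) (W : 𝒳 × 𝒴 → 𝒵 → ℝ) (hW : IsCondPmf W) (a b) :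
    ∑ c, pJ q W (a, b, c) = q (a, b) := by
  change ∑ c, q (a, b) * W (a, b) c = _
  rw [← Finset.mul_sum, (hW _).2, mul_one]

lemma pJ_pmf (q : 𝒳 × 𝒴 → ℝ) (hq : IsPmf q) (W : 𝒳 × 𝒴 → 𝒵 → ℝ) (hW : IsCondPmf W) :
    IsPmf (pJ q W) := by
  refine ⟨pJ_nonneg q hq W hW, ?_⟩
  rw [Fintype.sum_prod_type, ← hq.2, Fintype.sum_prod_type]
  refine Finset.sum_congr rfl fun x _ => ?_
  rw [Fintype.sum_prod_type]
  exact Finset.sum_congr rfl fun y _ => pJ_marg q W hW x y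

lemma pZ_pmf (q : 𝒳 × 𝒴 → ℝ) (hq : IsPmf q) (W : 𝒳 × 𝒴 → 𝒵 → ℝ) (hW : IsCondPmf W) :
    IsPmf (pZ q W) := by
  refine ⟨fun c => Finset.sum_nonneg fun a _ => Finset.sum_nonneg fun b _ => pJ_nonneg q hq W hW _, ?_⟩
  rw [← (pJ_pmf q hq W hW).2]
  unfold pZ
  rw [Finset.sum_comm, Fintype.sum_prod_type]
  refine Finset.sum_congr rfl fun x _ => ?_
  rw [Finset.sum_comm, Fintype.sum_prod_type]

lemma K1_nonneg (q : 𝒳 × 𝒴 → ℝ) (hq : IsPmf q) (W : 𝒳 × 𝒴 → 𝒵 → ℝ) (hW : IsCondPmf W) (b c) :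
    0 ≤ K1 q W b c :=
  div_nonneg (Finset.sum_nonneg fun a _ => pJ_nonneg q hq W hW _) (Finset.sum_nonneg fun a _ => hq.1 _)

lemma K1_sum (q : 𝒳 × 𝒴 → ℝ) (W : 𝒳 × 𝒴 → 𝒵 → ℝ) (hW : IsCondPmf W) (b) :
    ∑ c, K1 q W b c ≤ 1 := by
  unfold K1
  rw [← Finset.sum_div, Finset.sum_comm]
  simp_rw [pJ_marg q W hW]
  exact div_self_le_one _

lemma K2_eq (q : 𝒳 × 𝒴 → ℝ) (W : 𝒳 × 𝒴 → 𝒵 → ℝ) :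
    K2 q W = K1 (swap q) (fun t => W (t.2, t.1)) := rfl

lemma pos_facts (q : 𝒳 × 𝒴 → ℝ) (hq : IsPmf q) (W : 𝒳 × 𝒴 → 𝒵 → ℝ) (hW : IsCondPmf W)
    (t : 𝒳 × 𝒴 × 𝒵) (h : 0 < pJ q W t) :
    0 < q (t.1, t.2.1) ∧ 0 < W (t.1, t.2.1) t.2.2 ∧ 0 < pZ q W t.2.2 ∧ 0 < K1 q W t.2.1 t.2.2 ∧
      0 < K2 q W t.1 t.2.2 := by
  obtain ⟨a, b, c⟩ := t
  have nn := pJ_nonneg q hq W hW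
  have h1 : 0 < q (a, b) := lt_of_le_of_ne (hq.1 _) (by rintro h0; simp [pJ, ← h0] at h)
  have h2 : 0 < W (a, b) c := lt_of_le_of_ne ((hW _).1 _) (by rintro h0; simp [pJ, ← h0] at h)
  refine ⟨h1, h2, ?_, ?_, ?_⟩
  · exact Finset.sum_pos' (fun a _ => Finset.sum_nonneg fun b _ => nn _)
      ⟨a, Finset.mem_univ _, Finset.sum_pos' (fun b _ => nn _) ⟨b, Finset.mem_univ _, h⟩⟩
  · exact div_pos (Finset.sum_pos' (fun b _ => nn _) ⟨a, Finset.mem_univ _, h⟩)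
      (Finset.sum_pos' (fun b _ => hq.1 _) ⟨a, Finset.mem_univ _, h1⟩)
  · exact div_pos (Finset.sum_pos' (fun b _ => nn _) ⟨b, Finset.mem_univ _, h⟩)
      (Finset.sum_pos' (fun b _ => hq.1 _) ⟨b, Finset.mem_univ _, h1⟩)

lemma info1 (q : 𝒳 × 𝒴 → ℝ) (hq : IsPmf q) (W : 𝒳 × 𝒴 → 𝒵 → ℝ) (hW : IsCondPmf W) :
    condMI (pJ q W) = ∑ t, pJ q W t * (Real.logb 2 (W (t.1, t.2.1) t.2.2)
      - Real.logb 2 (K1 q W t.2.1 t.2.2)) := by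
  rw [condMI_eq]
  refine Finset.sum_congr rfl fun t _ => ?_
  rcases (pJ_nonneg q hq W hW t).eq_or_lt with h | h
  · rw [← h]; simp
  · obtain ⟨h1, h2, -, -, -⟩ := pos_facts q hq W hW t h
    have nn := pJ_nonneg q hq W hW
    simp_rw [pJ_marg q W hW]
    have a1 : 0 < ∑ a, pJ q W (a, t.2.1, t.2.2) :=
      Finset.sum_pos' (fun b _ => nn _) ⟨t.1, Finset.mem_univ _, h⟩
    have a2 : 0 < ∑ a, q (a, t.2.1) :=
      Finset.sum_pos' (fun b _ => hq.1 _) ⟨t.1, Finset.mem_univ _, h1⟩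
    unfold K1
    rw [Real.logb_div a1.ne' a2.ne']
    have : Real.logb 2 (pJ q W t) = Real.logb 2 (q (t.1, t.2.1)) +
      Real.logb 2 (W (t.1, t.2.1) t.2.2) := Real.logb_mul h1.ne' h2.ne'
    rw [this]
    ring

lemma info2 (q : 𝒳 × 𝒴 → ℝ) (hq : IsPmf q) (W : 𝒳 × 𝒴 → 𝒵 → ℝ) (hW : IsCondPmf W) :
    condMI (fun t : 𝒴 × 𝒳 × 𝒵 => pJ q W (t.2.1, t.1, t.2.2)) =
      ∑ t, pJ q W t * (Real.logb 2 (W (t.1, t.2.1) t.2.2) - Real.logb 2 (K2 q W t.1 t.2.2)) := by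
  have h := info1 (swap q) (swap_pmf q hq) (fun t => W (t.2, t.1)) (fun t => hW _)
  rw [← K2_eq] at h
  refine Eq.trans h ?_
  rw [Fintype.sum_prod_type, Fintype.sum_prod_type]
  simp_rw [Fintype.sum_prod_type]
  rw [Finset.sum_comm]
  rfl

lemma typ_prod {S : Type} {n : ℕ} (num den : S → ℝ) (I ε : ℝ) (s : Fin n → S)
    (hn : ∀ i, 0 < num (s i)) (hd : ∀ i, 0 < den (s i))
    (h : |∑ i, (Real.logb 2 (num (s i)) - Real.logb 2 (den (s i))) - n * I| ≤ n * ε) :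
    (2 : ℝ) ^ (n * (I - ε)) * ∏ i, den (s i) ≤ ∏ i, num (s i) ∧
    ∏ i, num (s i) ≤ (2 : ℝ) ^ (n * (I + ε)) * ∏ i, den (s i) := by
  have pn : 0 < ∏ i, num (s i) := Finset.prod_pos fun i _ => hn i
  have pd : 0 < ∏ i, den (s i) := Finset.prod_pos fun i _ => hd i
  rw [Finset.sum_sub_distrib, ← Real.logb_prod _ _ (fun i _ => (hn i).ne'),
    ← Real.logb_prod _ _ (fun i _ => (hd i).ne'), abs_le] at h
  have en : ∏ i, num (s i) = (2 : ℝ) ^ Real.logb 2 (∏ i, num (s i)) :=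
    (Real.rpow_logb (by norm_num) (by norm_num) pn).symm
  have ed : ∏ i, den (s i) = (2 : ℝ) ^ Real.logb 2 (∏ i, den (s i)) :=
    (Real.rpow_logb (by norm_num) (by norm_num) pd).symm
  rw [en, ed, ← Real.rpow_add (by norm_num), ← Real.rpow_add (by norm_num),
    Real.rpow_le_rpow_left_iff (by norm_num), Real.rpow_le_rpow_left_iff (by norm_num)]
  constructor <;> linarith [h.1, h.2]

lemma sum_triples (n : ℕ) (F : (Fin n → 𝒳) × (Fin n → 𝒴) → (Fin n → 𝒵) → ℝ) :
    ∑ xy, ∑ z, F xy z = ∑ s : Fin n → 𝒳 × 𝒴 × 𝒵,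
      F (fun i => (s i).1, fun i => (s i).2.1) (fun i => (s i).2.2) := by
  rw [← Fintype.sum_prod_type' F]
  symm
  exact Fintype.sum_equiv
    { toFun := fun s => ((fun i => (s i).1, fun i => (s i).2.1), fun i => (s i).2.2)
      invFun := fun t i => (t.1.1 i, t.1.2 i, t.2 i)
      left_inv := fun s => rfl
      right_inv := fun t => rfl } _ _ (fun s => rfl)

lemma change_meas {Z : Type} [Fintype Z] (P K : Z → ℝ) (hK : ∀ z, 0 ≤ K z)
    (hKs : ∑ z, K z ≤ 1) (T : Z → Prop) (x : ℝ)
    (h : ∀ z, T z → (2 : ℝ) ^ x * P z ≤ K z) :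
    ∑ z, P z * (if T z then 1 else 0) ≤ (2 : ℝ) ^ (-x) := by
  have hx : (0 : ℝ) < 2 ^ x := by positivity
  rw [Real.rpow_neg (by norm_num), ← one_div, le_div_iff₀ hx, Finset.sum_mul]
  refine le_trans (Finset.sum_le_sum fun z _ => ?_) hKs
  split_ifs with hz
  · linarith [h z hz]
  · simpa using hK z

/-- numerical facts about the number of messages -/
lemma numerics (n : ℕ) (hn : 0 < n) (I R J e : ℝ) (he : 0 < e) (hR : 0 ≤ R) (hJ : I = R + J)
    (m L : ℕ) (hm : m = ⌈(2 : ℝ) ^ (n * (R + 10 * e))⌉₊) (hL : L = ⌈(2 : ℝ) ^ (n * (J - 8 * e))⌉₊) :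
    0 < m ∧ Real.logb 2 m / n ≤ R + 10 * e + 1 / n ∧
    (2 : ℝ) ^ (n * e) ≤ (2 : ℝ) ^ (-(n * (I + e))) * (m * L) ∧
    m * (L * (L - 1)) * ((2 : ℝ) ^ (-(n * (I - e))) * (2 : ℝ) ^ (-(n * (J - e)))) ≤
      4 * (2 : ℝ) ^ (n * (-(4 * e))) := by
  have hn' : (0 : ℝ) < n := by exact_mod_cast hn
  set M := (2 : ℝ) ^ (n * (R + 10 * e)) with hM
  set N := (2 : ℝ) ^ (n * (J - 8 * e)) with hN
  have hM1 : 1 ≤ M := Real.one_le_rpow (by norm_num) (by positivity)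
  have hN0 : 0 < N := by positivity
  have m1 : M ≤ m := by rw [hm]; exact Nat.le_ceil _
  have m2 : (m : ℝ) ≤ 2 * M := by
    have : (m : ℝ) < M + 1 := by rw [hm]; exact Nat.ceil_lt_add_one (by linarith)
    linarith
  have l1 : N ≤ L := by rw [hL]; exact Nat.le_ceil _
  have l2 : (L : ℝ) < N + 1 := by rw [hL]; exact Nat.ceil_lt_add_one hN0.le
  have hL1 : (1 : ℝ) ≤ L := by
    have : 0 < L := by rw [hL]; exact Nat.ceil_pos.2 hN0
    exact_mod_cast this
  have hmpos : (0 : ℝ) < m := by linarith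
  have l3 : (L : ℝ) * (L - 1) ≤ 2 * N * N := by
    by_cases hc : N ≤ 1
    · have : L ≤ 1 := by rw [hL]; exact Nat.ceil_le.2 (by simpa using hc)
      have : (L : ℝ) ≤ 1 := by exact_mod_cast this
      have : (L : ℝ) - 1 = 0 := by linarith
      rw [this, mul_zero]; positivity
    · push Not at hc
      apply mul_le_mul <;> linarith
  refine ⟨by exact_mod_cast hmpos, ?_, ?_, ?_⟩
  · have : Real.logb 2 m ≤ Real.logb 2 (2 * M) :=
      Real.logb_le_logb_of_le (by norm_num) hmpos m2
    rw [Real.logb_mul (by norm_num) (by positivity), hM, Real.logb_rpow (by norm_num) (by norm_num),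
      Real.logb_self_eq_one (by norm_num)] at this
    rw [div_le_iff₀ hn']
    have e : (R + 10 * e + 1 / n) * n = 1 + n * (R + 10 * e) := by field_simp; ring
    rw [e]; exact this
  · have : M * N ≤ m * L := mul_le_mul m1 l1 hN0.le hmpos.le
    refine le_trans (le_of_eq ?_) (mul_le_mul_of_nonneg_left this (by positivity))
    rw [hM, hN, ← Real.rpow_add (by norm_num), ← Real.rpow_add (by norm_num)]
    congr 1
    rw [hJ]; ring
  · have : (m : ℝ) * (L * (L - 1)) ≤ (2 * M) * (2 * N * N) :=
      mul_le_mul m2 l3 (mul_nonneg (by linarith) (by linarith)) (by positivity)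
    refine le_trans (mul_le_mul_of_nonneg_right this (by positivity)) (le_of_eq ?_)
    rw [show (2 * M) * (2 * N * N) * ((2 : ℝ) ^ (-(n * (I - e))) * (2 : ℝ) ^ (-(n * (J - e)))) =
      4 * (M * N * N * (2 : ℝ) ^ (-(n * (I - e))) * (2 : ℝ) ^ (-(n * (J - e)))) by ring]
    congr 1
    rw [hM, hN, ← Real.rpow_add (by norm_num), ← Real.rpow_add (by norm_num),
      ← Real.rpow_add (by norm_num), ← Real.rpow_add (by norm_num)]
    congr 1
    rw [hJ]; ring

lemma asym (e η : ℝ) (he : 0 < e) (hη : 0 < η) : ∀ᶠ n : ℕ in Filter.atTop,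
    Real.exp (-(2 : ℝ) ^ (n * e)) ≤ η ∧ 8 * (2 : ℝ) ^ (n * (-(4 * e))) ≤ η ∧ 1 / (n : ℝ) ≤ e := by
  have e1 : ∀ (n : ℕ) (x : ℝ), (2 : ℝ) ^ (n * x) = ((2 : ℝ) ^ x) ^ n := by
    intro n x
    rw [mul_comm, Real.rpow_mul (by norm_num), Real.rpow_natCast]
  have t1 : Filter.Tendsto (fun n : ℕ => Real.exp (-(2 : ℝ) ^ (n * e))) Filter.atTop (nhds 0) := by
    simp_rw [e1]
    exact Real.tendsto_exp_neg_atTop_nhds_zero.comp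
      (tendsto_pow_atTop_atTop_of_one_lt (Real.one_lt_rpow (by norm_num) he))
  have t2 : Filter.Tendsto (fun n : ℕ => 8 * (2 : ℝ) ^ (n * (-(4 * e)))) Filter.atTop (nhds 0) := by
    simp_rw [e1]
    have := (tendsto_pow_atTop_nhds_zero_of_lt_one (r := (2 : ℝ) ^ (-(4 * e))) (by positivity)
      (Real.rpow_lt_one_of_one_lt_of_neg (by norm_num) (by linarith))).const_mul 8
    simpa using this
  have t3 : Filter.Tendsto (fun n : ℕ => 1 / (n : ℝ)) Filter.atTop (nhds 0) :=
    tendsto_one_div_atTop_nhds_zero_nat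
  filter_upwards [t1.eventually_le_const hη, t2.eventually_le_const hη, t3.eventually_le_const he]
    with n h1 h2 h3
  exact ⟨h1, h2, h3⟩

end ach
end TWR

namespace TWR

section ach2
variable {𝒳 𝒴 𝒵 : Type} [Fintype 𝒳] [Fintype 𝒴] [Fintype 𝒵]

/-- Union bound over five typicality events. -/
lemma union5 {S : Type} [Fintype S] (w : S → ℝ) (hw : ∀ s, 0 ≤ w s) (B E1 E2 E3 E4 E5 : S → Prop)
    (h : ∀ s, 0 < w s → E1 s → E2 s → E3 s → E4 s → E5 s → B s) (η : ℝ)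
    (h1 : ∑ s, w s * (if E1 s then 0 else 1) ≤ η) (h2 : ∑ s, w s * (if E2 s then 0 else 1) ≤ η)
    (h3 : ∑ s, w s * (if E3 s then 0 else 1) ≤ η) (h4 : ∑ s, w s * (if E4 s then 0 else 1) ≤ η)
    (h5 : ∑ s, w s * (if E5 s then 0 else 1) ≤ η) :
    ∑ s, w s * (if B s then 0 else 1) ≤ 5 * η := by
  have key : ∑ s, w s * (if B s then 0 else 1) ≤ ∑ s, (w s * (if E1 s then 0 else 1)
      + w s * (if E2 s then 0 else 1) + w s * (if E3 s then 0 else 1)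
      + w s * (if E4 s then 0 else 1) + w s * (if E5 s then 0 else 1)) := by
    refine Finset.sum_le_sum fun s _ => ?_
    have nn : ∀ (p : Prop) [Decidable p], 0 ≤ w s * (if p then 0 else 1) := fun p _ =>
      mul_nonneg (hw s) (by split_ifs <;> norm_num)
    by_cases hB : B s
    · rw [if_pos hB, mul_zero]
      have := nn (E1 s); have := nn (E2 s); have := nn (E3 s); have := nn (E4 s)
      have := nn (E5 s)
      linarith
    · rw [if_neg hB, mul_one]
      rcases (hw s).eq_or_lt with h0 | h0
      · rw [← h0]; simp
      have n1 := nn (E1 s); have n2 := nn (E2 s); have n3 := nn (E3 s); have n4 := nn (E4 s)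
      have n5 := nn (E5 s)
      by_cases e1 : E1 s
      · by_cases e2 : E2 s
        · by_cases e3 : E3 s
          · by_cases e4 : E4 s
            · by_cases e5 : E5 s
              · exact absurd (h s h0 e1 e2 e3 e4 e5) hB
              · rw [if_neg e5, mul_one]; linarith
            · rw [if_neg e4, mul_one]; linarith
          · rw [if_neg e3, mul_one]; linarith
        · rw [if_neg e2, mul_one]; linarith
      · rw [if_neg e1, mul_one]; linarith
  simp only [Finset.sum_add_distrib] at key
  linarith

lemma prod_kernel_sum (n : ℕ) {α : Type} (K : α → 𝒵 → ℝ) (hK : ∀ a c, 0 ≤ K a c)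
    (hs : ∀ a, ∑ c, K a c ≤ 1) (y : Fin n → α) :
    ∑ z : Fin n → 𝒵, ∏ i, K (y i) (z i) ≤ 1 := by
  rw [sum_pi_prod (fun i => K (y i))]
  exact Finset.prod_le_one (fun i _ => Finset.sum_nonneg fun c _ => hK _ _) (fun i _ => hs _)

theorem block_code [Nonempty 𝒵] (q : 𝒳 × 𝒴 → ℝ) (hq : IsPmf q) (W : 𝒳 × 𝒴 → 𝒵 → ℝ)
    (hW : IsCondPmf W) (c1 c2 : 𝒳 × 𝒴 × 𝒵 → ℝ) (D1 D2 R : ℝ)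
    (hD1 : ∑ t, pJ q W t * c1 t ≤ D1) (hD2 : ∑ t, pJ q W t * c2 t ≤ D2) (hR : 0 ≤ R)
    (hR1 : condMI (pJ q W) ≤ R)
    (hR2 : condMI (fun t : 𝒴 × 𝒳 × 𝒵 => pJ q W (t.2.1, t.1, t.2.2)) ≤ R)
    (ε η : ℝ) (hε : 0 < ε) (hη : 0 < η) :
    ∀ᶠ n : ℕ in Filter.atTop, ∃ (m : ℕ) (f : (Fin n → 𝒳) × (Fin n → 𝒴) → Fin m)
      (dec1 : Fin m × (Fin n → 𝒴) → Fin n → 𝒵) (dec2 : Fin m × (Fin n → 𝒳) → Fin n → 𝒵),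
      Real.logb 2 m / n ≤ R + ε ∧
      ∑ xy, iid q n xy * (if ∃ z, (∑ i, c1 (xy.1 i, xy.2 i, z i) ≤ n * (D1 + ε) ∧
        ∑ i, c2 (xy.1 i, xy.2 i, z i) ≤ n * (D2 + ε)) ∧ dec1 (f xy, xy.2) = z ∧
        dec2 (f xy, xy.1) = z then 0 else 1) ≤ η := by
  have hJ := pJ_pmf q hq W hW
  have hZ := pZ_pmf q hq W hW
  set e := ε / 12 with he'
  have he : 0 < e := by positivity
  set hI : 𝒳 × 𝒴 × 𝒵 → ℝ := fun t => Real.logb 2 (W (t.1, t.2.1) t.2.2)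
    - Real.logb 2 (pZ q W t.2.2) with hhI
  set hJ1 : 𝒳 × 𝒴 × 𝒵 → ℝ := fun t => Real.logb 2 (K1 q W t.2.1 t.2.2)
    - Real.logb 2 (pZ q W t.2.2) with hhJ1
  set hJ2 : 𝒳 × 𝒴 × 𝒵 → ℝ := fun t => Real.logb 2 (K2 q W t.1 t.2.2)
    - Real.logb 2 (pZ q W t.2.2) with hhJ2
  set I := ∑ t, pJ q W t * hI t with hIdef
  set J1 := ∑ t, pJ q W t * hJ1 t with hJ1def
  set J2 := ∑ t, pJ q W t * hJ2 t with hJ2def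
  have i1 : condMI (pJ q W) = I - J1 := by
    rw [info1 q hq W hW, hIdef, hJ1def, ← Finset.sum_sub_distrib]
    refine Finset.sum_congr rfl fun t _ => ?_
    simp only [hhI, hhJ1]; ring
  have i2 : condMI (fun t : 𝒴 × 𝒳 × 𝒵 => pJ q W (t.2.1, t.1, t.2.2)) = I - J2 := by
    rw [info2 q hq W hW, hIdef, hJ2def, ← Finset.sum_sub_distrib]
    refine Finset.sum_congr rfl fun t _ => ?_
    simp only [hhI, hhJ2]; ring
  set J := I - R with hJdef
  have hJJ1 : J ≤ J1 := by linarith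
  have hJJ2 : J ≤ J2 := by linarith
  have hη' : 0 < η / 10 := by positivity
  filter_upwards [lln (pJ q W) hJ hI e _ he hη', lln (pJ q W) hJ hJ1 e _ he hη',
    lln (pJ q W) hJ hJ2 e _ he hη', lln (pJ q W) hJ c1 e _ he hη',
    lln (pJ q W) hJ c2 e _ he hη', asym e (η / 10) he hη', Filter.eventually_gt_atTop 0]
    with n l1 l2 l3 l4 l5 las hn
  have hn' : (0 : ℝ) < n := by exact_mod_cast hn
  obtain ⟨a1, a2, a3⟩ := las
  obtain ⟨hm, n1, n2, n3⟩ := numerics n hn I R J e he hR (by linarith) _ _ rfl rfl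
  set m := ⌈(2 : ℝ) ^ (n * (R + 10 * e))⌉₊ with hmdef
  set L := ⌈(2 : ℝ) ^ (n * (J - 8 * e))⌉₊ with hLdef
  set P : (Fin n → 𝒵) → ℝ := fun z => ∏ i, pZ q W (z i) with hPdef
  set K : (Fin n → 𝒳) × (Fin n → 𝒴) → (Fin n → 𝒵) → ℝ :=
    fun xy z => ∏ i, W (xy.1 i, xy.2 i) (z i) with hKdef
  have hP : IsPmf P := ⟨fun z => Finset.prod_nonneg fun i _ => hZ.1 _, sum_pi_one _ hZ.2⟩
  have hK : IsCondPmf K := by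
    intro xy
    refine ⟨fun z => Finset.prod_nonneg fun i _ => (hW _).1 _, ?_⟩
    have := sum_pi_prod (fun i : Fin n => W (xy.1 i, xy.2 i))
    refine this.trans ?_
    exact Finset.prod_eq_one fun i _ => (hW _).2
  set T1 : (Fin n → 𝒴) → (Fin n → 𝒵) → Prop := fun y z =>
    (2 : ℝ) ^ (n * (J - e)) * P z ≤ ∏ i, K1 q W (y i) (z i) with hT1
  set T2 : (Fin n → 𝒳) → (Fin n → 𝒵) → Prop := fun x z =>
    (2 : ℝ) ^ (n * (J - e)) * P z ≤ ∏ i, K2 q W (x i) (z i) with hT2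
  set C : (Fin n → 𝒳) → (Fin n → 𝒴) → (Fin n → 𝒵) → Prop := fun x y z =>
    ∑ i, c1 (x i, y i, z i) ≤ n * (D1 + ε) ∧ ∑ i, c2 (x i, y i, z i) ≤ n * (D2 + ε) with hC
  obtain ⟨A, hA⟩ : ∃ A : (Fin n → 𝒳) → (Fin n → 𝒴) → (Fin n → 𝒵) → Prop, ∀ x y z, A x y z ↔
    ((2 : ℝ) ^ (n * (I - e)) * P z ≤ K (x, y) z ∧ K (x, y) z ≤ (2 : ℝ) ^ (n * (I + e)) * P z ∧
    T1 y z ∧ T2 x z ∧ C x y z) := ⟨_, fun _ _ _ => Iff.rfl⟩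
  obtain ⟨f, dec1, dec2, hcode⟩ := oneshot (iid q n)
    ⟨iid_nonneg q hq n, iid_sum q hq n⟩ K hK P hP A T1 T2
    (fun x y z h => ((hA x y z).1 h).2.2.1) (fun x y z h => ((hA x y z).1 h).2.2.2.1)
    ((2 : ℝ) ^ (-(n * (I + e)))) ((2 : ℝ) ^ (-(n * (I - e)))) ((2 : ℝ) ^ (-(n * (J - e))))
    (by positivity)
    (by
      intro x y z h
      rw [Real.rpow_neg (by norm_num), inv_mul_le_iff₀ (by positivity)]
      exact ((hA x y z).1 h).2.1)
    (by
      intro x y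
      exact change_meas P (K (x, y)) (hK _).1 (hK _).2.le (A x y) _ fun z h => ((hA x y z).1 h).1)
    (by
      intro y
      exact change_meas P (fun z => ∏ i, K1 q W (y i) (z i))
        (fun z => Finset.prod_nonneg fun i _ => K1_nonneg q hq W hW _ _)
        (prod_kernel_sum n (K1 q W) (K1_nonneg q hq W hW) (K1_sum q W hW) y) (T1 y) _
        fun z h => h)
    (by
      intro x
      have k0 : ∀ a c, 0 ≤ K2 q W a c := by
        rw [K2_eq]
        exact K1_nonneg (swap q) (swap_pmf q hq) (fun t => W (t.2, t.1)) (fun t => hW _)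
      have k1 : ∀ a, ∑ c, K2 q W a c ≤ 1 := by
        rw [K2_eq]
        exact K1_sum (swap q) (fun t => W (t.2, t.1)) (fun t => hW _)
      exact change_meas P (fun z => ∏ i, K2 q W (x i) (z i))
        (fun z => Finset.prod_nonneg fun i _ => k0 _ _)
        (prod_kernel_sum n (K2 q W) k0 k1 x) (T2 x) _
        fun z h => h)
    m L hm
  refine ⟨m, f, dec1, dec2, by linarith, ?_⟩
  have hbad : ∑ xy, ∑ z, iid q n xy * K xy z * (if A xy.1 xy.2 z then 0 else 1) ≤ 5 * (η / 10) := by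
    rw [sum_triples]
    have hw : ∀ s : Fin n → 𝒳 × 𝒴 × 𝒵, iid q n (fun i => (s i).1, fun i => (s i).2.1) *
        K (fun i => (s i).1, fun i => (s i).2.1) (fun i => (s i).2.2) = ∏ i, pJ q W (s i) := by
      intro s
      exact Finset.prod_mul_distrib.symm
    simp_rw [hw]
    refine union5 (fun s : Fin n → 𝒳 × 𝒴 × 𝒵 => ∏ i, pJ q W (s i))
      (fun s => Finset.prod_nonneg fun i _ => hJ.1 _) _ _ _ _ _ _ ?_ _ l1 l2 l3 l4 l5
    intro s hs e1 e2 e3 e4 e5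
    rw [hA]
    have hpos : ∀ i, 0 < pJ q W (s i) := by
      intro i
      refine lt_of_le_of_ne (hJ.1 _) fun h0 => ?_
      exact hs.ne' (Finset.prod_eq_zero (Finset.mem_univ i) h0.symm)
    have pf := fun i => pos_facts q hq W hW (s i) (hpos i)
    have t1 := typ_prod (fun t : 𝒳 × 𝒴 × 𝒵 => W (t.1, t.2.1) t.2.2) (fun t => pZ q W t.2.2) I e s
      (fun i => (pf i).2.1) (fun i => (pf i).2.2.1) e1
    have t2 := typ_prod (fun t : 𝒳 × 𝒴 × 𝒵 => K1 q W t.2.1 t.2.2) (fun t => pZ q W t.2.2) J1 e s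
      (fun i => (pf i).2.2.2.1) (fun i => (pf i).2.2.1) e2
    have t3 := typ_prod (fun t : 𝒳 × 𝒴 × 𝒵 => K2 q W t.1 t.2.2) (fun t => pZ q W t.2.2) J2 e s
      (fun i => (pf i).2.2.2.2) (fun i => (pf i).2.2.1) e3
    have P0 : 0 ≤ ∏ i, pZ q W (s i).2.2 := Finset.prod_nonneg fun i _ => hZ.1 _
    have mono : ∀ J' : ℝ, J ≤ J' → (2 : ℝ) ^ (n * (J - e)) * ∏ i, pZ q W (s i).2.2 ≤
        (2 : ℝ) ^ (n * (J' - e)) * ∏ i, pZ q W (s i).2.2 := fun J' hJ' =>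
      mul_le_mul_of_nonneg_right (Real.rpow_le_rpow_of_exponent_le (by norm_num)
        (mul_le_mul_of_nonneg_left (by linarith) hn'.le)) P0
    refine ⟨t1.1, t1.2, (mono _ hJJ1).trans t2.1, (mono _ hJJ2).trans t3.1, ?_, ?_⟩
    · have h1 := (abs_le.1 e4).2
      have h2 : (n : ℝ) * ∑ a, pJ q W a * c1 a ≤ n * D1 := mul_le_mul_of_nonneg_left hD1 hn'.le
      have h3 : (n : ℝ) * e ≤ n * ε := mul_le_mul_of_nonneg_left (by linarith) hn'.le
      change ∑ i, c1 (s i) ≤ n * (D1 + ε)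
      rw [mul_add]; linarith
    · have h1 := (abs_le.1 e5).2
      have h2 : (n : ℝ) * ∑ a, pJ q W a * c2 a ≤ n * D2 := mul_le_mul_of_nonneg_left hD2 hn'.le
      have h3 : (n : ℝ) * e ≤ n * ε := mul_le_mul_of_nonneg_left (by linarith) hn'.le
      change ∑ i, c2 (s i) ≤ n * (D2 + ε)
      rw [mul_add]; linarith
  have hexp : Real.exp (-((2 : ℝ) ^ (-(n * (I + e))) * (m * L))) ≤ η / 10 :=
    le_trans (Real.exp_le_exp.2 (neg_le_neg n2)) a1
  refine le_trans (Finset.sum_le_sum fun xy _ =>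
    mul_le_mul_of_nonneg_left ?_ (iid_nonneg q hq n xy)) (hcode.trans (by linarith))
  by_cases h : ∃ z, A xy.1 xy.2 z ∧ dec1 (f xy, xy.2) = z ∧ dec2 (f xy, xy.1) = z
  · rw [if_pos h]
    obtain ⟨z, hz, hz'⟩ := h
    rw [if_pos ⟨z, ((hA _ _ _).1 hz).2.2.2.2, hz'⟩]
  · rw [if_neg h]; split_ifs <;> norm_num

end ach2

section ach3
variable {𝒳 𝒴 Xh Yh : Type} [Fintype 𝒳] [Fintype 𝒴] [Fintype Xh] [Fintype Yh]

/-- bounded-cost estimate -/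
lemma cost_bound {S : Type} [Fintype S] (w : S → ℝ) (hw : ∀ s, 0 ≤ w s) (hs : ∑ s, w s = 1)
    (c b : S → ℝ) (D M η : ℝ) (hD : 0 ≤ D) (hM : 0 ≤ M) (hc : ∀ s, c s ≤ M)
    (hb : ∀ s, 0 ≤ b s) (hG : ∀ s, 1 ≤ b s ∨ c s ≤ D) (hη : ∑ s, w s * b s ≤ η) :
    ∑ s, w s * c s ≤ D + M * η := by
  have : ∑ s, w s * c s ≤ ∑ s, (w s * D + M * (w s * b s)) := by
    refine Finset.sum_le_sum fun s _ => ?_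
    have h0 : 0 ≤ M * (w s * b s) := mul_nonneg hM (mul_nonneg (hw s) (hb s))
    rcases hG s with h | h
    · have h1 := mul_le_mul_of_nonneg_left (hc s) (hw s)
      have h2 := mul_nonneg (hw s) hD
      have h3 : M * (w s * 1) ≤ M * (w s * b s) :=
        mul_le_mul_of_nonneg_left (mul_le_mul_of_nonneg_left h (hw s)) hM
      linarith
    · have := mul_le_mul_of_nonneg_left h (hw s)
      linarith
  rw [Finset.sum_add_distrib, ← Finset.sum_mul, hs, ← Finset.mul_sum] at this
  have := mul_le_mul_of_nonneg_left hη hM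
  linarith

theorem achiev (q : 𝒳 × 𝒴 → ℝ) (hq : IsPmf q) (hne : Nonempty (Xh × Yh))
    (δ1 : 𝒳 → Xh → ℝ) (δ2 : 𝒴 → Yh → ℝ) (d1max d2max : ℝ)
    (hδ1 : ∀ x xh, 0 ≤ δ1 x xh ∧ δ1 x xh ≤ d1max)
    (hδ2 : ∀ y yh, 0 ≤ δ2 y yh ∧ δ2 y yh ≤ d2max)
    (hM1 : 0 ≤ d1max) (hM2 : 0 ≤ d2max)
    (d1 d2 : ℝ) (hd1 : 0 ≤ d1) (hd2 : 0 ≤ d2) (r : ℝ)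
    (hr : r ∈ crFormulaSet q δ1 δ2 d1 d2) : 0 ≤ r ∧ CRAchievable q δ1 δ2 d1 d2 r := by
  obtain ⟨W, hW, hc1, hc2, hr⟩ := hr
  have r1 : condMI (pJ q W) ≤ r := by rw [hr]; exact le_max_left _ _
  have r2 : condMI (fun t : 𝒴 × 𝒳 × (Xh × Yh) => pJ q W (t.2.1, t.1, t.2.2)) ≤ r := by
    rw [hr]; exact le_max_right _ _
  have hr0 : 0 ≤ r := (condMI_nonneg _ (pJ_pmf q hq W hW)).trans r1
  refine ⟨hr0, ?_⟩
  intro ε hε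
  set M := d1max + d2max + 1 with hM
  have hMpos : 0 < M := by positivity
  set η := min ε (ε / (2 * M)) with hη
  have hηpos : 0 < η := lt_min hε (by positivity)
  have hη1 : η ≤ ε := min_le_left _ _
  have hη2 : M * η ≤ ε / 2 := by
    have : η ≤ ε / (2 * M) := min_le_right _ _
    calc M * η ≤ M * (ε / (2 * M)) := mul_le_mul_of_nonneg_left this hMpos.le
      _ = ε / 2 := by field_simp
  have hb1 : d1max * η ≤ ε / 2 :=
    (mul_le_mul_of_nonneg_right (by linarith) hηpos.le).trans hη2
  have hb2 : d2max * η ≤ ε / 2 :=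
    (mul_le_mul_of_nonneg_right (by linarith) hηpos.le).trans hη2
  have hD1 : ∑ t, pJ q W t * δ1 t.1 t.2.2.1 ≤ d1 := by
    have := sum_regroup (fun x y (z : Xh × Yh) => q (x, y) * W (x, y) z * δ1 x z.1)
    rw [this] at hc1; exact hc1
  have hD2 : ∑ t, pJ q W t * δ2 t.2.1 t.2.2.2 ≤ d2 := by
    have := sum_regroup (fun x y (z : Xh × Yh) => q (x, y) * W (x, y) z * δ2 y z.2)
    rw [this] at hc2; exact hc2
  have ev := block_code q hq W hW (fun t => δ1 t.1 t.2.2.1) (fun t => δ2 t.2.1 t.2.2.2) d1 d2 r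
    hD1 hD2 hr0 r1 r2 (ε / 2) η (by positivity) hηpos
  obtain ⟨n, ⟨m, f, dec1, dec2, hrate, hprob⟩, hn⟩ :=
    (ev.and (Filter.eventually_gt_atTop 0)).exists
  have hn' : (0 : ℝ) < n := by exact_mod_cast hn
  obtain ⟨b, hb0, hb1', hbs⟩ : ∃ b : (Fin n → 𝒳) × (Fin n → 𝒴) → ℝ, (∀ xy, 0 ≤ b xy) ∧
      (∀ xy, 1 ≤ b xy ∨ ((∑ i, δ1 (xy.1 i) (dec1 (f xy, xy.2) i).1 ≤ n * (d1 + ε / 2) ∧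
        ∑ i, δ2 (xy.2 i) (dec2 (f xy, xy.1) i).2 ≤ n * (d2 + ε / 2)) ∧
        dec1 (f xy, xy.2) = dec2 (f xy, xy.1))) ∧ ∑ xy, iid q n xy * b xy ≤ η := by
    refine ⟨_, ?_, ?_, hprob⟩
    · intro xy
      split_ifs <;> norm_num
    · intro xy
      split_ifs with h
      · right
        obtain ⟨z, ⟨h1, h2⟩, h3, h4⟩ := h
        rw [h3, h4]
        exact ⟨⟨h1, h2⟩, rfl⟩
      · left; exact le_rfl
  have avg : ∀ (u : Fin n → ℝ) (B : ℝ), ∑ i, u i ≤ n * B → (n : ℝ)⁻¹ * ∑ i, u i ≤ B := by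
    intro u B h
    rw [inv_mul_le_iff₀ hn']; exact h
  have avgM : ∀ (u : Fin n → ℝ) (B : ℝ), (∀ i, u i ≤ B) → (n : ℝ)⁻¹ * ∑ i, u i ≤ B := by
    intro u B h
    apply avg
    refine (Finset.sum_le_sum fun i _ => h i).trans ?_
    simp
  have q0 := iid_nonneg q hq n
  refine ⟨n, m, f, fun p i => (dec1 p i).1, fun p i => (dec2 p i).2, fun p i => (dec1 p i).2,
    fun p i => (dec2 p i).1, hn, by linarith, ?_, ?_, ?_, ?_⟩
  · have := cost_bound (iid q n) q0 (iid_sum q hq n)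
      (fun xy => (n : ℝ)⁻¹ * ∑ i, δ1 (xy.1 i) (dec1 (f xy, xy.2) i).1) b (d1 + ε / 2) d1max η
      (by positivity) hM1 (fun xy => avgM _ _ fun i => (hδ1 _ _).2) hb0
      (fun xy => (hb1' xy).imp id fun h => avg _ _ h.1.1) hbs
    unfold Delta1; linarith
  · have := cost_bound (iid q n) q0 (iid_sum q hq n)
      (fun xy => (n : ℝ)⁻¹ * ∑ i, δ2 (xy.2 i) (dec2 (f xy, xy.1) i).2) b (d2 + ε / 2) d2max η
      (by positivity) hM2 (fun xy => avgM _ _ fun i => (hδ2 _ _).2) hb0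
      (fun xy => (hb1' xy).imp id fun h => avg _ _ h.1.2) hbs
    unfold Delta2; linarith
  · refine le_trans (Finset.sum_le_sum fun xy _ => ?_) (hbs.trans hη1)
    split_ifs with h1
    · exact mul_nonneg (q0 xy) (hb0 xy)
    · rcases hb1' xy with h | h
      · exact le_mul_of_one_le_right (q0 xy) h
      · exact absurd (by beta_reduce; rw [h.2]) h1
  · refine le_trans (Finset.sum_le_sum fun xy _ => ?_) (hbs.trans hη1)
    split_ifs with h1
    · exact mul_nonneg (q0 xy) (hb0 xy)
    · rcases hb1' xy with h | h
      · exact le_mul_of_one_le_right (q0 xy) h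
      · exact absurd (by beta_reduce; rw [h.2]) h1

lemma formula_nonempty (q : 𝒳 × 𝒴 → ℝ)
    (δ1 : 𝒳 → Xh → ℝ) (δ2 : 𝒴 → Yh → ℝ)
    (hδ1n : ∀ x, ∃ xh, δ1 x xh = 0) (hδ2n : ∀ y, ∃ yh, δ2 y yh = 0)
    (d1 d2 : ℝ) (hd1 : 0 ≤ d1) (hd2 : 0 ≤ d2) : (crFormulaSet q δ1 δ2 d1 d2).Nonempty := by
  choose u hu using hδ1n
  choose v hv using hδ2n
  refine ⟨_, fun xy z => if z = (u xy.1, v xy.2) then 1 else 0, ?_, ?_, ?_, rfl⟩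
  · intro xy
    refine ⟨fun z => by positivity, by simp⟩
  · refine le_trans (le_of_eq ?_) hd1
    refine Finset.sum_eq_zero fun x _ => Finset.sum_eq_zero fun y _ => Finset.sum_eq_zero fun z _ => ?_
    beta_reduce
    split_ifs with h
    · rw [h]; simp [hu]
    · simp
  · refine le_trans (le_of_eq ?_) hd2
    refine Finset.sum_eq_zero fun x _ => Finset.sum_eq_zero fun y _ => Finset.sum_eq_zero fun z _ => ?_
    beta_reduce
    split_ifs with h
    · rw [h]; simp [hv]
    · simp

end ach3
end TWR

open TWR in
/-- Theorem 1: `R_CR(d1,d2)` equals the minimum over test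
channels in `𝒫_{X̂Ŷ|XY}(d1,d2)` of `max{I(X;X̂,Ŷ|Y), I(Y;X̂,Ŷ|X)}`. -/
theorem crrd_eq_single_letter
    {𝒳 𝒴 Xh Yh : Type} [Fintype 𝒳] [Fintype 𝒴] [Fintype Xh] [Fintype Yh]
    (q : 𝒳 × 𝒴 → ℝ) (hq : IsPmf q)
    (δ1 : 𝒳 → Xh → ℝ) (δ2 : 𝒴 → Yh → ℝ) (d1max d2max : ℝ)
    (hδ1 : ∀ x xh, 0 ≤ δ1 x xh ∧ δ1 x xh ≤ d1max)
    (hδ2 : ∀ y yh, 0 ≤ δ2 y yh ∧ δ2 y yh ≤ d2max)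
    (hδ1n : ∀ x, ∃ xh, δ1 x xh = 0) (hδ2n : ∀ y, ∃ yh, δ2 y yh = 0)
    (d1 d2 : ℝ) (hd1 : 0 ≤ d1) (hd2 : 0 ≤ d2) :
    CRRD q δ1 δ2 d1 d2 = sInf (crFormulaSet q δ1 δ2 d1 d2) := by
  have hxy : Nonempty (𝒳 × 𝒴) := by
    by_contra h
    rw [not_nonempty_iff] at h
    have := hq.2
    simp at this
  obtain ⟨x, y⟩ := hxy
  obtain ⟨xh, hxh⟩ := hδ1n x
  obtain ⟨yh, hyh⟩ := hδ2n y
  have hne : Nonempty (Xh × Yh) := ⟨(xh, yh)⟩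
  have hM1 : 0 ≤ d1max := (hδ1 x xh).1.trans (hδ1 x xh).2
  have hM2 : 0 ≤ d2max := (hδ2 y yh).1.trans (hδ2 y yh).2
  have hach := achiev q hq hne δ1 δ2 d1max d2max hδ1 hδ2 hM1 hM2 d1 d2 hd1 hd2
  have hnon := formula_nonempty q δ1 δ2 hδ1n hδ2n d1 d2 hd1 hd2
  unfold CRRD
  apply le_antisymm
  · exact le_csInf hnon fun r hr => csInf_le ⟨0, fun r' hr' => hr'.1⟩ (hach r hr)
  · obtain ⟨r0, hr0⟩ := hnon
    refine le_csInf ⟨r0, hach r0 hr0⟩ fun r hr => ?_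
    obtain ⟨r', hr', hle⟩ := converse q hq hne δ1 δ2 d1 d2 r hr.2
    exact (csInf_le ⟨0, fun s hs => (hach s hs).1⟩ hr').trans hle
end
end

section
/- For the doubly symmetric binary source with crossover probability ρ and Hamming distortion measures, the rate-distortion function is R(d1,d2) = h(ρ) − h(d_min) if d_min ≤ ρ, and R(d1,d2) = 0 otherwise, where d_min = min{d1,d2}. -/
open scoped BigOperators Classical

noncomputable section

lemma rdx_sum_cons {α : Type} [Fintype α] (n : ℕ) (G : (Fin (n + 1) → α) → ℝ) :
    ∑ a, G a = ∑ a0 : α, ∑ a' : Fin n → α, G (Fin.cons a0 a') := by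
  rw [← Fintype.sum_prod_type']
  exact (Fintype.sum_equiv (Fin.consEquiv (fun _ => α)) _ _ (fun x => rfl)).symm

lemma rdx_sum_prod {α : Type} [Fintype α] (n : ℕ) (p : Fin n → α → ℝ) :
    ∑ a : Fin n → α, ∏ i, p i (a i) = ∏ i, ∑ x, p i x := by
  rw [Finset.prod_univ_sum]
  simp

lemma rdx_E0 {α : Type} [Fintype α] (p : α → ℝ) (hp : ∑ x, p x = 1) (n : ℕ) :
    ∑ a : Fin n → α, ∏ i, p (a i) = 1 := by
  rw [rdx_sum_prod n (fun _ => p)]; simp [hp]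

lemma rdx_E1 {α : Type} [Fintype α] (p f : α → ℝ) (hp : ∑ x, p x = 1) (n : ℕ) :
    ∑ a : Fin n → α, (∏ i, p (a i)) * ∑ i, f (a i) = n * ∑ x, p x * f x := by
  induction n with
  | zero => simp
  | succ n ih =>
    rw [rdx_sum_cons]
    simp only [Fin.prod_univ_succ, Fin.sum_univ_succ, Fin.cons_zero, Fin.cons_succ]
    have : ∀ a0 : α, ∑ a' : Fin n → α, p a0 * (∏ i, p (a' i)) * (f a0 + ∑ i, f (a' i))
        = p a0 * f a0 + p a0 * (n * ∑ x, p x * f x) := by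
      intro a0
      rw [← ih, Finset.mul_sum]
      have h0 := rdx_E0 p hp n
      calc _ = ∑ a' : Fin n → α, ((p a0 * f a0) * (∏ i, p (a' i)) +
            p a0 * ((∏ i, p (a' i)) * ∑ i, f (a' i))) := by
              apply Finset.sum_congr rfl; intros; ring
        _ = _ := by rw [Finset.sum_add_distrib, ← Finset.mul_sum, h0, mul_one]
    simp only [this]
    rw [Finset.sum_add_distrib, ← Finset.sum_mul, hp]; push_cast; ring

lemma rdx_E2 {α : Type} [Fintype α] (p f : α → ℝ) (hp : ∑ x, p x = 1)
    (hf : ∑ x, p x * f x = 0) (n : ℕ) :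
    ∑ a : Fin n → α, (∏ i, p (a i)) * (∑ i, f (a i)) ^ 2 = n * ∑ x, p x * f x ^ 2 := by
  induction n with
  | zero => simp
  | succ n ih =>
    rw [rdx_sum_cons]
    simp only [Fin.prod_univ_succ, Fin.sum_univ_succ, Fin.cons_zero, Fin.cons_succ]
    have : ∀ a0 : α, ∑ a' : Fin n → α, p a0 * (∏ i, p (a' i)) * (f a0 + ∑ i, f (a' i)) ^ 2
        = p a0 * f a0 ^ 2 + p a0 * (n * ∑ x, p x * f x ^ 2) := by
      intro a0
      rw [← ih, Finset.mul_sum]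
      have h0 := rdx_E0 p hp n
      have h1 := rdx_E1 p f hp n
      calc _ = ∑ a' : Fin n → α, (((p a0 * f a0 ^ 2) * (∏ i, p (a' i)) +
            (2 * p a0 * f a0) * ((∏ i, p (a' i)) * ∑ i, f (a' i))) +
            p a0 * ((∏ i, p (a' i)) * (∑ i, f (a' i)) ^ 2)) := by
              apply Finset.sum_congr rfl; intros; ring
        _ = _ := by
          rw [Finset.sum_add_distrib, Finset.sum_add_distrib, ← Finset.mul_sum, ← Finset.mul_sum,
            h0, h1, hf]; ring
    simp only [this]
    rw [Finset.sum_add_distrib, ← Finset.sum_mul, hp]; push_cast; ring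

/-- Weak law of large numbers (Chebyshev, one-sided). -/
lemma rdx_wlln {α : Type} [Fintype α] (p f : α → ℝ) (hp0 : ∀ x, 0 ≤ p x) (hp : ∑ x, p x = 1)
    (μ ε : ℝ) (hμ : ∑ x, p x * f x = μ) (hε : 0 < ε) :
    ∃ C : ℝ, ∀ n : ℕ, 0 < n →
      ∑ a : Fin n → α, (if n * (μ + ε) < ∑ i, f (a i) then ∏ i, p (a i) else 0) ≤ C / n := by
  refine ⟨(∑ x, p x * (f x - μ) ^ 2) / ε ^ 2, fun n hn => ?_⟩
  have hn' : (0 : ℝ) < n := by exact_mod_cast hn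
  have h2 := rdx_E2 p (fun x => f x - μ) hp
    (by simp [mul_sub, Finset.sum_sub_distrib, hμ, ← Finset.sum_mul, hp]) n
  have key : (n * ε) ^ 2 *
      (∑ a : Fin n → α, (if n * (μ + ε) < ∑ i, f (a i) then ∏ i, p (a i) else 0))
      ≤ n * ∑ x, p x * (f x - μ) ^ 2 := by
    rw [← h2, Finset.mul_sum]
    apply Finset.sum_le_sum
    intro a _
    have hpos : 0 ≤ ∏ i, p (a i) := Finset.prod_nonneg fun i _ => hp0 _
    split_ifs with h
    · rw [mul_comm]
      apply mul_le_mul_of_nonneg_left _ hpos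
      have : (n : ℝ) * ε ≤ ∑ i, (f (a i) - μ) := by
        simp only [Finset.sum_sub_distrib, Finset.sum_const, Finset.card_univ, Fintype.card_fin,
          nsmul_eq_mul]
        linarith
      exact pow_le_pow_left₀ (by positivity) this 2
    · rw [mul_zero]; positivity
  rw [div_div, le_div_iff₀ (by positivity)]
  have h3 : n * (n * ε ^ 2 *
      (∑ a : Fin n → α, (if n * (μ + ε) < ∑ i, f (a i) then ∏ i, p (a i) else 0)))
      ≤ n * ∑ x, p x * (f x - μ) ^ 2 := by
    calc _ = _ := by ring
      _ ≤ _ := key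
  have h4 := le_of_mul_le_mul_left h3 hn'
  linarith

/-- Greedy covering. -/
lemma rdx_greedy {A B : Type} [Fintype A] [Fintype B] (P : A → ℝ) (Q : B → ℝ)
    (hP : ∀ a, 0 ≤ P a) (hQ : ∀ b, 0 ≤ Q b) (hQ1 : ∑ b, Q b = 1) (G : A → B → Prop) (β : ℝ)
    (hβ1 : β ≤ 1) (S : A → Prop)
    (hS : ∀ a, S a → β ≤ ∑ b, if G a b then Q b else 0) (M : ℕ) :
    ∃ c : Fin M → B, ∑ a, (if S a ∧ ∀ j, ¬ G a (c j) then P a else 0)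
      ≤ (1 - β) ^ M * ∑ a, P a := by
  induction M with
  | zero =>
    refine ⟨Fin.elim0, ?_⟩
    simp only [pow_zero, one_mul]
    apply Finset.sum_le_sum
    intro a _
    split_ifs
    · exact le_rfl
    · exact hP a
  | succ M ih =>
    obtain ⟨c, hc⟩ := ih
    set w : A → ℝ := fun a => if S a ∧ ∀ j, ¬ G a (c j) then P a else 0 with hw
    have hw0 : ∀ a, 0 ≤ w a := by intro a; simp only [hw]; split_ifs; exacts [hP a, le_rfl]
    have havg : β * ∑ a, w a ≤ ∑ b, Q b * ∑ a, (if G a b then w a else 0) := by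
      calc β * ∑ a, w a = ∑ a, w a * β := by rw [mul_comm, Finset.sum_mul]
        _ ≤ ∑ a, w a * ∑ b, (if G a b then Q b else 0) := by
          apply Finset.sum_le_sum
          intro a _
          by_cases h : S a
          · exact mul_le_mul_of_nonneg_left (hS a h) (hw0 a)
          · simp [hw, h]
        _ = ∑ b, Q b * ∑ a, (if G a b then w a else 0) := by
          simp only [Finset.mul_sum]
          rw [Finset.sum_comm]
          apply Finset.sum_congr rfl; intro b _
          apply Finset.sum_congr rfl; intro a _
          split_ifs <;> ring
    obtain ⟨b, hb⟩ : ∃ b, β * ∑ a, w a ≤ ∑ a, (if G a b then w a else 0) := by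
      by_contra hcon
      push Not at hcon
      have hne : ∃ b, 0 < Q b := by
        by_contra h
        push Not at h
        have : ∑ b, Q b ≤ 0 := Finset.sum_nonpos fun b _ => h b
        linarith
      obtain ⟨b0, hb0⟩ := hne
      have : ∑ b, Q b * ∑ a, (if G a b then w a else 0) < ∑ b, Q b * (β * ∑ a, w a) := by
        apply Finset.sum_lt_sum
        · intro b _; exact mul_le_mul_of_nonneg_left (hcon b).le (hQ b)
        · exact ⟨b0, Finset.mem_univ _, mul_lt_mul_of_pos_left (hcon b0) hb0⟩
      rw [← Finset.sum_mul, hQ1, one_mul] at this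
      linarith
    refine ⟨Fin.cons b c, ?_⟩
    have : ∑ a, (if S a ∧ ∀ j, ¬ G a ((Fin.cons b c : Fin (M + 1) → B) j) then P a else 0)
        = ∑ a, w a - ∑ a, (if G a b then w a else 0) := by
      rw [← Finset.sum_sub_distrib]
      apply Finset.sum_congr rfl; intro a _
      simp only [Fin.forall_fin_succ, Fin.cons_zero, Fin.cons_succ, hw]
      by_cases h1 : S a <;> by_cases h2 : G a b <;> by_cases h3 : ∀ j, ¬ G a (c j) <;>
        simp [h1, h2, h3]
    rw [this]
    calc _ ≤ (1 - β) * ∑ a, w a := by linarith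
      _ ≤ (1 - β) * ((1 - β) ^ M * ∑ a, P a) :=
        mul_le_mul_of_nonneg_left hc (by linarith)
      _ = _ := by ring

/-- One-shot covering lemma. -/
lemma rdx_oneshot {A B : Type} [Fintype A] [Fintype B] (J : A → B → ℝ) (P : A → ℝ) (Q : B → ℝ)
    (hJ : ∀ a b, 0 ≤ J a b) (hP : ∀ a, ∑ b, J a b = P a)
    (hP1 : ∑ a, P a = 1)
    (hQ : ∀ b, 0 ≤ Q b) (hQ1 : ∑ b, Q b = 1) (G : A → B → Prop) (T η : ℝ) (hT : 1 ≤ 2 * T)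
    (hG : ∀ a b, G a b → J a b ≤ T * (P a * Q b))
    (hη : ∑ a, ∑ b, (if G a b then 0 else J a b) ≤ η) (M : ℕ) :
    ∃ c : Fin M → B, ∑ a, (if ∀ j, ¬ G a (c j) then P a else 0)
      ≤ 2 * η + (1 - 1 / (2 * T)) ^ M := by
  have hP0 : ∀ a, 0 ≤ P a := fun a => by rw [← hP]; exact Finset.sum_nonneg fun b _ => hJ a b
  have hTp : 0 < T := by linarith
  obtain ⟨c, hc⟩ := rdx_greedy P Q hP0 hQ hQ1 G (1 / (2 * T))
    (by rw [div_le_one (by linarith)]; exact hT)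
    (fun a => 1 / (2 * T) ≤ ∑ b, if G a b then Q b else 0) (fun a h => h) M
  refine ⟨c, ?_⟩
  rw [hP1, mul_one] at hc
  have h2 : ∀ a, (if ∀ j, ¬ G a (c j) then P a else 0) ≤
      2 * (∑ b, (if G a b then 0 else J a b)) +
      (if (1 / (2 * T) ≤ ∑ b, if G a b then Q b else 0) ∧ ∀ j, ¬ G a (c j) then P a else 0) := by
    intro a
    have hnn : 0 ≤ ∑ b, (if G a b then 0 else J a b) :=
      Finset.sum_nonneg fun b _ => by split_ifs; exacts [le_rfl, hJ a b]
    by_cases hS : (1 / (2 * T) ≤ ∑ b, if G a b then Q b else 0)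
    · simp only [hS, true_and]; linarith
    · have h3 : P a ≤ 2 * ∑ b, (if G a b then 0 else J a b) := by
        have hs : P a = ∑ b, (if G a b then 0 else J a b) + ∑ b, (if G a b then J a b else 0) := by
          rw [← hP, ← Finset.sum_add_distrib]
          apply Finset.sum_congr rfl; intro b _
          split_ifs <;> simp
        have hl : ∑ b, (if G a b then J a b else 0) ≤
            T * P a * ∑ b, (if G a b then Q b else 0) := by
          rw [Finset.mul_sum]
          apply Finset.sum_le_sum; intro b _
          split_ifs with h
          · have := hG a b h; linarith
          · simp
        have hl2 : T * P a * ∑ b, (if G a b then Q b else 0) ≤ T * P a * (1 / (2 * T)) :=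
          mul_le_mul_of_nonneg_left (not_le.mp hS).le (mul_nonneg hTp.le (hP0 a))
        have hl3 : T * P a * (1 / (2 * T)) = P a / 2 := by field_simp
        linarith
      simp only [hS, false_and, if_false]
      split_ifs
      · linarith
      · linarith
  calc _ ≤ _ := Finset.sum_le_sum fun a _ => h2 a
    _ ≤ _ := by
      rw [Finset.sum_add_distrib, ← Finset.mul_sum]; linarith

/-- Asymptotics needed for the parameters. -/
lemma rdx_params (I C ε : ℝ) (hI : 0 ≤ I) (hε : 0 < ε) :
    ∃ n m : ℕ, 0 < n ∧ 0 < m ∧ Real.logb 2 m / n ≤ I + 3 * ε ∧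
      C / n + (1 - 1 / (2 * (2 : ℝ) ^ (n * (I + ε)))) ^ m ≤ ε := by
  have t1 : Filter.Tendsto (fun n : ℕ => C / n) Filter.atTop (nhds 0) :=
    tendsto_const_div_atTop_nhds_zero_nat C
  have t2 : Filter.Tendsto (fun n : ℕ => (1 : ℝ) / n) Filter.atTop (nhds 0) :=
    tendsto_const_div_atTop_nhds_zero_nat 1
  have t3 : Filter.Tendsto (fun n : ℕ => Real.exp (-((2 : ℝ) ^ ε) ^ n / 2))
      Filter.atTop (nhds 0) := by
    apply Real.tendsto_exp_atBot.comp
    have h1 : Filter.Tendsto (fun n : ℕ => ((2 : ℝ) ^ ε) ^ n) Filter.atTop Filter.atTop :=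
      tendsto_pow_atTop_atTop_of_one_lt (Real.one_lt_rpow (by norm_num) hε)
    have h2 := (Filter.tendsto_neg_atTop_atBot.comp h1).atBot_div_const (r := 2) (by norm_num)
    exact h2
  have e1 := t1.eventually (gt_mem_nhds (show (0 : ℝ) < ε / 2 by linarith))
  have e2 := t2.eventually (gt_mem_nhds hε)
  have e3 := t3.eventually (gt_mem_nhds (show (0 : ℝ) < ε / 2 by linarith))
  obtain ⟨n, ⟨h1, h2, h3⟩, hn⟩ :=
    ((e1.and (e2.and e3)).and (Filter.eventually_gt_atTop 0)).exists
  have hn' : (0 : ℝ) < n := by exact_mod_cast hn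
  set X : ℝ := (2 : ℝ) ^ (n * (I + 2 * ε)) with hX
  have hX1 : 1 ≤ X := Real.one_le_rpow (by norm_num) (by positivity)
  have hm1 : X ≤ (⌈X⌉₊ : ℝ) := Nat.le_ceil X
  have hm2 : (⌈X⌉₊ : ℝ) < X + 1 := Nat.ceil_lt_add_one (by linarith)
  refine ⟨n, ⌈X⌉₊, hn, Nat.ceil_pos.mpr (by linarith), ?_, ?_⟩
  · have : Real.logb 2 (⌈X⌉₊ : ℝ) ≤ 1 + n * (I + 2 * ε) := by
      rw [Real.logb_le_iff_le_rpow (by norm_num) (by linarith), Real.rpow_add (by norm_num),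
        Real.rpow_one]
      linarith
    rw [div_le_iff₀ hn']
    rw [div_lt_iff₀ hn'] at h2
    nlinarith
  · set T : ℝ := (2 : ℝ) ^ (n * (I + ε)) with hT
    have hT1 : 1 ≤ T := Real.one_le_rpow (by norm_num) (by positivity)
    have hXT : X = T * ((2 : ℝ) ^ ε) ^ n := by
      rw [hX, hT, ← Real.rpow_natCast, ← Real.rpow_mul (by norm_num),
        ← Real.rpow_add (by norm_num)]
      congr 1; ring
    have hb0 : 0 ≤ 1 - 1 / (2 * T) := by
      rw [sub_nonneg, div_le_one (by linarith)]; linarith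
    have hb1 : 1 - 1 / (2 * T) ≤ Real.exp (-(1 / (2 * T))) := by
      have := Real.add_one_le_exp (-(1 / (2 * T))); linarith
    have : (1 - 1 / (2 * T)) ^ ⌈X⌉₊ ≤ Real.exp (-((2 : ℝ) ^ ε) ^ n / 2) := by
      calc _ ≤ Real.exp (-(1 / (2 * T))) ^ ⌈X⌉₊ := pow_le_pow_left₀ hb0 hb1 _
        _ = Real.exp (⌈X⌉₊ * (-(1 / (2 * T)))) := (Real.exp_nat_mul _ _).symm
        _ ≤ _ := by
          apply Real.exp_le_exp.mpr
          have h5 : X * (1 / (2 * T)) ≤ ⌈X⌉₊ * (1 / (2 * T)) :=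
            mul_le_mul_of_nonneg_right hm1 (by positivity)
          have h6 : X * (1 / (2 * T)) = ((2 : ℝ) ^ ε) ^ n / 2 := by
            rw [hXT]; field_simp
          linarith
    linarith

/-- Lossy source coding theorem (direct part). -/
lemma rdx_lossy {A B : Type} [Fintype A] [Fintype B] (J : A → B → ℝ) (P : A → ℝ) (Q : B → ℝ)
    (δ : A → B → ℝ) (hδ : ∀ a b, δ a b ≤ 1)
    (hJ : ∀ a b, 0 < J a b) (hP : ∀ a, ∑ b, J a b = P a) (hP0 : ∀ a, 0 < P a)
    (hP1 : ∑ a, P a = 1) (hQ : ∀ b, 0 < Q b) (hQ1 : ∑ b, Q b = 1) (D I : ℝ) (hI0 : 0 ≤ I)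
    (hD0 : 0 ≤ D)
    (hD : ∑ t : A × B, J t.1 t.2 * δ t.1 t.2 = D)
    (hI : ∑ t : A × B, J t.1 t.2 * Real.logb 2 (J t.1 t.2 / (P t.1 * Q t.2)) = I)
    (ε : ℝ) (hε : 0 < ε) :
    ∃ (n m : ℕ) (e : (Fin n → A) → Fin m) (c : Fin m → Fin n → B), 0 < n ∧
      Real.logb 2 m / n ≤ I + 3 * ε ∧
      ∑ a : Fin n → A, (∏ i, P (a i)) * ((n : ℝ)⁻¹ * ∑ i, δ (a i) (c (e a) i)) ≤ D + 2 * ε := by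
  set p : A × B → ℝ := fun t => J t.1 t.2 with hp
  have hp0 : ∀ t, 0 ≤ p t := fun t => (hJ _ _).le
  have hp1 : ∑ t, p t = 1 := by rw [Fintype.sum_prod_type]; simp [hp, hP, hP1]
  obtain ⟨C1, hC1⟩ := rdx_wlln p (fun t => δ t.1 t.2) hp0 hp1 D ε hD hε
  obtain ⟨C2, hC2⟩ := rdx_wlln p (fun t => Real.logb 2 (J t.1 t.2 / (P t.1 * Q t.2)))
    hp0 hp1 I ε hI hε
  obtain ⟨n, m, hn, hm, hrate, herr⟩ := rdx_params I (2 * (C1 + C2)) ε hI0 hε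
  have hn' : (0 : ℝ) < n := by exact_mod_cast hn
  specialize hC1 n hn
  specialize hC2 n hn
  set G : (Fin n → A) → (Fin n → B) → Prop := fun a b =>
    ∑ i, δ (a i) (b i) ≤ n * (D + ε) ∧
    ∑ i, Real.logb 2 (J (a i) (b i) / (P (a i) * Q (b i))) ≤ n * (I + ε) with hGdef
  have hT1 : (1 : ℝ) ≤ (2 : ℝ) ^ (n * (I + ε)) :=
    Real.one_le_rpow (by norm_num) (by positivity)
  obtain ⟨c, hc⟩ := rdx_oneshot (fun (a : Fin n → A) (b : Fin n → B) => ∏ i, J (a i) (b i))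
    (fun a => ∏ i, P (a i)) (fun b => ∏ i, Q (b i))
    (fun a b => Finset.prod_nonneg fun i _ => (hJ _ _).le)
    (fun a => by
      rw [rdx_sum_prod n (fun i b => J (a i) b)]; simp [hP])
    (rdx_E0 P hP1 n) (fun b => Finset.prod_nonneg fun i _ => (hQ _).le) (rdx_E0 Q hQ1 n)
    G ((2 : ℝ) ^ (n * (I + ε))) ((C1 + C2) / n) (by linarith)
    (by
      intro a b hab
      have h1 : ∏ i, J (a i) (b i) =
          (2 : ℝ) ^ (∑ i, Real.logb 2 (J (a i) (b i) / (P (a i) * Q (b i)))) *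
          ((∏ i, P (a i)) * ∏ i, Q (b i)) := by
        rw [← Finset.prod_mul_distrib, Real.rpow_sum_of_pos (by norm_num),
          ← Finset.prod_mul_distrib]
        apply Finset.prod_congr rfl
        intro i _
        have := hP0 (a i)
        have := hQ (b i)
        have := hJ (a i) (b i)
        rw [Real.rpow_logb (by norm_num) (by norm_num) (by positivity)]
        field_simp
      show ∏ i, J (a i) (b i) ≤ _
      rw [h1]
      apply mul_le_mul_of_nonneg_right
      · exact Real.rpow_le_rpow_of_exponent_le (by norm_num) hab.2
      · exact mul_nonneg (Finset.prod_nonneg fun i _ => (hP0 _).le)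
          (Finset.prod_nonneg fun i _ => (hQ _).le))
    (by
      rw [← Fintype.sum_prod_type']
      rw [← Fintype.sum_equiv (Equiv.arrowProdEquivProdArrow (Fin n) (fun _ => A) (fun _ => B))
        (fun t => if G (fun i => (t i).1) (fun i => (t i).2) then 0 else ∏ i, p (t i)) _
        (fun t => by
          by_cases h : G (fun i => (t i).1) (fun i => (t i).2)
          · exact (if_pos h).trans (if_pos h).symm
          · exact (if_neg h).trans (if_neg h).symm)]
      rw [add_div]
      refine le_trans ?_ (add_le_add hC1 hC2)
      rw [← Finset.sum_add_distrib]
      apply Finset.sum_le_sum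
      intro t _
      have hnn : 0 ≤ ∏ i, p (t i) := Finset.prod_nonneg fun i _ => hp0 _
      simp only [hGdef]
      split_ifs with h1 h2 h3 h4 <;> first | linarith | (exfalso; grind))
    m
  have hm0 : Nonempty (Fin m) := ⟨⟨0, hm⟩⟩
  refine ⟨n, m, fun a => if h : ∃ j, G a (c j) then h.choose else Classical.choice hm0, c, hn,
    hrate, ?_⟩
  have hbound : ∀ a : Fin n → A, (∏ i, P (a i)) * ((n : ℝ)⁻¹ * ∑ i, δ (a i)
      (c (if h : ∃ j, G a (c j) then h.choose else Classical.choice hm0) i)) ≤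
      (∏ i, P (a i)) * (D + ε) + (if ∀ j, ¬ G a (c j) then ∏ i, P (a i) else 0) := by
    intro a
    have hnn : 0 ≤ ∏ i, P (a i) := Finset.prod_nonneg fun i _ => (hP0 _).le
    by_cases h : ∃ j, G a (c j)
    · have hs := h.choose_spec.1
      simp only [dif_pos h]
      have hne : ¬ ∀ j, ¬ G a (c j) := by push Not; exact h
      rw [if_neg hne, add_zero]
      apply mul_le_mul_of_nonneg_left _ hnn
      rw [inv_mul_le_iff₀ hn']
      exact hs
    · have hne : ∀ j, ¬ G a (c j) := by push Not at h; exact h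
      rw [if_pos hne, dif_neg h]
      have : (n : ℝ)⁻¹ * ∑ i, δ (a i) (c (Classical.choice hm0) i) ≤ 1 := by
        rw [inv_mul_le_iff₀ hn', mul_one]
        calc _ ≤ ∑ i : Fin n, (1 : ℝ) := Finset.sum_le_sum fun i _ => hδ _ _
          _ = n := by simp
      nlinarith [mul_le_mul_of_nonneg_left this hnn, mul_nonneg hnn (add_nonneg hD0 hε.le)]
  refine le_trans (Finset.sum_le_sum fun a _ => hbound a) ?_
  rw [Finset.sum_add_distrib, ← Finset.sum_mul, rdx_E0 P hP1 n]
  have hc' : ∑ a : Fin n → A, (if ∀ j, ¬ G a (c j) then ∏ i, P (a i) else 0) ≤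
      2 * ((C1 + C2) / n) + (1 - 1 / (2 * (2 : ℝ) ^ (n * (I + ε)))) ^ m := by
    convert hc
  have : 2 * ((C1 + C2) / (n : ℝ)) = 2 * (C1 + C2) / n := by ring
  linarith

/-- Bernoulli weights. -/
def rdxBw (r : ℝ) (z : Bool) : ℝ := if z then r else 1 - r

lemma rdx_bw_pos {r : ℝ} (h0 : 0 < r) (h1 : r < 1) (z : Bool) : 0 < rdxBw r z := by
  unfold rdxBw; split_ifs <;> linarith

lemma rdx_dsbs (ρ : ℝ) (x y : Bool) : TWR.dsbs ρ (x, y) = 1 / 2 * rdxBw ρ (xor x y) := by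
  cases x <;> cases y <;> simp [TWR.dsbs, rdxBw] <;> ring

lemma rdx_dHam_bool (a b : Bool) : TWR.dHam a b = if xor a b then 1 else 0 := by
  cases a <;> cases b <;> simp [TWR.dHam]

lemma rdx_bern_code (ρ d ε : ℝ) (hd : 0 < d) (hdρ : d < ρ) (hρ : ρ ≤ 1 / 2) (hε : 0 < ε)
    (hmono : TWR.binEnt d ≤ TWR.binEnt ρ) :
    ∃ (n m : ℕ) (e : (Fin n → Bool) → Fin m) (c : Fin m → Fin n → Bool), 0 < n ∧
      Real.logb 2 m / n ≤ TWR.binEnt ρ - TWR.binEnt d + 3 * ε ∧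
      ∑ z : Fin n → Bool, (∏ i, rdxBw ρ (z i)) *
        ((n : ℝ)⁻¹ * ∑ i, TWR.dHam (z i) (c (e z) i)) ≤ d + 2 * ε := by
  have h2d : 0 < 1 - 2 * d := by linarith
  set p : ℝ := (ρ - d) / (1 - 2 * d) with hp
  have hp0 : 0 < p := div_pos (by linarith) h2d
  have hp1 : p < 1 := by rw [hp, div_lt_one h2d]; linarith
  have hpe : p * (1 - 2 * d) = ρ - d := by rw [hp, div_mul_cancel₀ _ h2d.ne']
  have hP : ∀ a : Bool, ∑ b, rdxBw p b * rdxBw d (xor a b) = rdxBw ρ a := by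
    intro a
    cases a <;> simp [rdxBw] <;> linarith
  have hPp := rdx_bw_pos (r := ρ) (by linarith) (by linarith)
  have hQp := rdx_bw_pos hp0 hp1
  have hDp := rdx_bw_pos hd (by linarith : d < 1)
  apply rdx_lossy (fun a b : Bool => rdxBw p b * rdxBw d (xor a b)) (rdxBw ρ) (rdxBw p)
    (fun a b => TWR.dHam a b) (fun a b => by rw [rdx_dHam_bool]; split_ifs <;> norm_num)
    (fun a b => mul_pos (hQp b) (hDp _)) hP hPp (by simp [rdxBw]) hQp (by simp [rdxBw]) d
    (TWR.binEnt ρ - TWR.binEnt d) (by linarith) hd.le _ _ ε hε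
  · simp only [rdx_dHam_bool, Fintype.sum_prod_type]
    simp [rdxBw]; ring
  · have : ∀ t : Bool × Bool, rdxBw p t.2 * rdxBw d (xor t.1 t.2) *
        Real.logb 2 (rdxBw p t.2 * rdxBw d (xor t.1 t.2) / (rdxBw ρ t.1 * rdxBw p t.2)) =
        rdxBw p t.2 * rdxBw d (xor t.1 t.2) *
        (Real.logb 2 (rdxBw d (xor t.1 t.2)) - Real.logb 2 (rdxBw ρ t.1)) := by
      intro t
      rw [← Real.logb_div (hDp _).ne' (hPp _).ne']
      have := (hQp t.2).ne'
      have := (hPp t.1).ne'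
      congr 2
      field_simp
    rw [Finset.sum_congr rfl fun t _ => this t, Fintype.sum_prod_type]
    have hT := hP true
    have hF := hP false
    simp [rdxBw] at hT hF
    simp [rdxBw, TWR.binEnt]
    linear_combination (-Real.logb 2 ρ) * hT + (-Real.logb 2 (1 - ρ)) * hF

lemma rdx_sum_xor (ρ : ℝ) (n : ℕ) (F : (Fin n → Bool) → ℝ) :
    ∑ xy : (Fin n → Bool) × (Fin n → Bool), TWR.iid (TWR.dsbs ρ) n xy *
      F (fun i => xor (xy.1 i) (xy.2 i)) = ∑ z : Fin n → Bool, (∏ i, rdxBw ρ (z i)) * F z := by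
  rw [Fintype.sum_prod_type, Finset.sum_comm]
  have h : ∀ y : Fin n → Bool, ∑ x : Fin n → Bool, TWR.iid (TWR.dsbs ρ) n (x, y) *
      F (fun i => xor (x i) (y i)) =
      (1 / 2) ^ n * ∑ z : Fin n → Bool, (∏ i, rdxBw ρ (z i)) * F z := by
    intro y
    rw [Finset.mul_sum]
    have hinv : Function.Involutive (fun (x : Fin n → Bool) (i : Fin n) => xor (x i) (y i)) := by
      intro x; funext i; simp
    apply Fintype.sum_equiv hinv.toPerm
    intro x
    simp only [TWR.iid, rdx_dsbs, Finset.prod_mul_distrib, Function.Involutive.coe_toPerm]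
    simp; ring
  rw [Finset.sum_congr rfl fun y _ => h y]
  simp

lemma rdx_ach_code (ρ d ε : ℝ) (hd : 0 < d) (hdρ : d < ρ) (hρ : ρ ≤ 1 / 2) (hε : 0 < ε)
    (hmono : TWR.binEnt d ≤ TWR.binEnt ρ) :
    ∃ (n m : ℕ) (f : (Fin n → Bool) × (Fin n → Bool) → Fin m)
    (g1 : Fin m × (Fin n → Bool) → Fin n → Bool)
    (g2 : Fin m × (Fin n → Bool) → Fin n → Bool),
    0 < n ∧ Real.logb 2 m / n ≤ TWR.binEnt ρ - TWR.binEnt d + 3 * ε ∧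
    TWR.Delta1 (TWR.dsbs ρ) TWR.dHam f g1 ≤ d + 2 * ε ∧
    TWR.Delta2 (TWR.dsbs ρ) TWR.dHam f g2 ≤ d + 2 * ε := by
  obtain ⟨n, m, e, c, hn, hr, hD⟩ := rdx_bern_code ρ d ε hd hdρ hρ hε hmono
  refine ⟨n, m, fun xy => e (fun i => xor (xy.1 i) (xy.2 i)),
    fun ky i => xor (c ky.1 i) (ky.2 i), fun ky i => xor (c ky.1 i) (ky.2 i), hn, hr, ?_, ?_⟩
  · rw [← rdx_sum_xor ρ n (fun z => (n : ℝ)⁻¹ * ∑ i, TWR.dHam (z i) (c (e z) i))] at hD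
    refine le_of_eq_of_le ?_ hD
    unfold TWR.Delta1
    have : ∀ a b k : Bool, TWR.dHam a (xor k b) = TWR.dHam (xor a b) k := by
      intro a b k; simp only [rdx_dHam_bool]; cases a <;> cases b <;> cases k <;> rfl
    simp only [this]
  · rw [← rdx_sum_xor ρ n (fun z => (n : ℝ)⁻¹ * ∑ i, TWR.dHam (z i) (c (e z) i))] at hD
    refine le_of_eq_of_le ?_ hD
    unfold TWR.Delta2
    have : ∀ a b k : Bool, TWR.dHam a (xor k b) = TWR.dHam (xor b a) k := by
      intro a b k; simp only [rdx_dHam_bool]; cases a <;> cases b <;> cases k <;> rfl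
    simp only [this]

lemma rdx_zero_code (ρ : ℝ) :
    ∃ (f : (Fin 1 → Bool) × (Fin 1 → Bool) → Fin 1)
    (g1 : Fin 1 × (Fin 1 → Bool) → Fin 1 → Bool)
    (g2 : Fin 1 × (Fin 1 → Bool) → Fin 1 → Bool),
    TWR.Delta1 (TWR.dsbs ρ) TWR.dHam f g1 = ρ ∧
    TWR.Delta2 (TWR.dsbs ρ) TWR.dHam f g2 = ρ := by
  have key : ∑ xy : (Fin 1 → Bool) × (Fin 1 → Bool), TWR.iid (TWR.dsbs ρ) 1 xy *
      (fun z : Fin 1 → Bool => if z 0 then (1 : ℝ) else 0) (fun i => xor (xy.1 i) (xy.2 i)) = ρ := by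
    rw [rdx_sum_xor ρ 1 (fun z : Fin 1 → Bool => if z 0 then (1 : ℝ) else 0), rdx_sum_cons]
    simp [rdxBw]
  refine ⟨fun _ => 0, fun t => t.2, fun t => t.2, ?_, ?_⟩
  · refine Eq.trans ?_ key
    unfold TWR.Delta1
    simp [rdx_dHam_bool]
  · refine Eq.trans ?_ key
    unfold TWR.Delta2
    have : ∀ a b : Bool, TWR.dHam a b = if xor b a then 1 else 0 := by
      intro a b; rw [rdx_dHam_bool, Bool.xor_comm]
    simp only [this]
    simp

lemma rdx_gibbs {A : Type} [Fintype A] (P Q : A → ℝ) (hP : ∀ a, 0 < P a) (hQ : ∀ a, 0 < Q a)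
    (hP1 : ∑ a, P a = 1) (hQ1 : ∑ a, Q a ≤ 1) :
    ∑ a, P a * Real.logb 2 (Q a) ≤ ∑ a, P a * Real.logb 2 (P a) := by
  have hl : 0 < Real.log 2 := Real.log_pos (by norm_num)
  have : ∀ a, P a * Real.logb 2 (Q a) ≤ P a * Real.logb 2 (P a) + (Q a - P a) / Real.log 2 := by
    intro a
    have h1 := Real.log_le_sub_one_of_pos (div_pos (hQ a) (hP a))
    rw [Real.log_div (hQ a).ne' (hP a).ne'] at h1
    have h2 := mul_le_mul_of_nonneg_left h1 (hP a).le
    have h3 : P a * (Q a / P a - 1) = Q a - P a := by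
      have := (hP a).ne'; field_simp
    rw [h3] at h2
    simp only [Real.logb]
    rw [← mul_div_assoc, ← mul_div_assoc, ← add_div]
    apply div_le_div_of_nonneg_right _ hl.le
    linarith
  refine le_trans (Finset.sum_le_sum fun a _ => this a) ?_
  rw [Finset.sum_add_distrib, ← Finset.sum_div, Finset.sum_sub_distrib, hP1]
  have : (∑ a, Q a - 1) / Real.log 2 ≤ 0 := div_nonpos_of_nonpos_of_nonneg (by linarith) hl.le
  linarith

lemma rdx_iid_sum (q φ : Bool × Bool → ℝ) (hq : ∑ t, q t = 1) (n : ℕ) :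
    ∑ xy : (Fin n → Bool) × (Fin n → Bool), TWR.iid q n xy * ∑ i, φ (xy.1 i, xy.2 i)
      = n * ∑ t, q t * φ t := by
  rw [← rdx_E1 q φ hq n]
  symm
  exact Fintype.sum_equiv
    (Equiv.arrowProdEquivProdArrow (Fin n) (fun _ => Bool) (fun _ => Bool)) _ _ (fun t => rfl)

lemma rdx_iid_one (q : Bool × Bool → ℝ) (hq : ∑ t, q t = 1) (n : ℕ) :
    ∑ xy : (Fin n → Bool) × (Fin n → Bool), TWR.iid q n xy = 1 := by
  rw [← rdx_E0 q hq n]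
  symm
  exact Fintype.sum_equiv
    (Equiv.arrowProdEquivProdArrow (Fin n) (fun _ => Bool) (fun _ => Bool)) _ _ (fun t => rfl)

lemma rdx_converse (ρ t : ℝ) (hρ0 : 0 < ρ) (hρ1 : ρ < 1) (ht0 : 0 < t) (ht1 : t ≤ 1 / 2)
    (n m : ℕ) (hn : 0 < n) (f : (Fin n → Bool) × (Fin n → Bool) → Fin m)
    (g1 : Fin m × (Fin n → Bool) → Fin n → Bool)
    (hΔ : TWR.Delta1 (TWR.dsbs ρ) TWR.dHam f g1 ≤ t) :
    TWR.binEnt ρ - TWR.binEnt t ≤ Real.logb 2 m / n := by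
  have hn' : (0 : ℝ) < n := by exact_mod_cast hn
  have hm : 0 < m := Fin.pos (f (fun _ => true, fun _ => true))
  have hm' : (0 : ℝ) < m := by exact_mod_cast hm
  have hq : ∀ s, 0 < TWR.dsbs ρ s := by
    rintro ⟨x, y⟩; rw [rdx_dsbs]; have := rdx_bw_pos hρ0 hρ1 (xor x y); positivity
  have hq1 : ∑ s, TWR.dsbs ρ s = 1 := by
    simp [Fintype.sum_prod_type, rdx_dsbs, rdxBw]; ring
  have hbt := rdx_bw_pos ht0 (by linarith : t < 1)
  set P : (Fin n → Bool) × (Fin n → Bool) → ℝ := TWR.iid (TWR.dsbs ρ) n with hPdef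
  set Q : (Fin n → Bool) × (Fin n → Bool) → ℝ := fun xy =>
    (1 / 2) ^ n * (1 / m) * ∏ i, rdxBw t (xor (xy.1 i) (g1 (f xy, xy.2) i)) with hQdef
  have hP : ∀ xy, 0 < P xy := fun xy => Finset.prod_pos fun i _ => hq _
  have hpr : ∀ xy : (Fin n → Bool) × (Fin n → Bool),
      0 < ∏ i, rdxBw t (xor (xy.1 i) (g1 (f xy, xy.2) i)) :=
    fun xy => Finset.prod_pos fun i _ => hbt _
  have hQ : ∀ xy, 0 < Q xy := fun xy => by have := hpr xy; simp only [hQdef]; positivity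
  have hQ1 : ∑ xy, Q xy ≤ 1 := by
    simp only [hQdef]
    rw [← Finset.mul_sum, Fintype.sum_prod_type, Finset.sum_comm]
    have h1 : ∀ y : Fin n → Bool,
        ∑ x : Fin n → Bool, ∏ i, rdxBw t (xor (x i) (g1 (f (x, y), y) i)) ≤ m := by
      intro y
      calc _ ≤ ∑ x : Fin n → Bool, ∑ k : Fin m, ∏ i, rdxBw t (xor (x i) (g1 (k, y) i)) := by
            apply Finset.sum_le_sum
            intro x _
            exact Finset.single_le_sum
              (f := fun k : Fin m => ∏ i, rdxBw t (xor (x i) (g1 (k, y) i)))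
              (fun k _ => Finset.prod_nonneg fun i _ => (hbt _).le) (Finset.mem_univ (f (x, y)))
        _ = ∑ k : Fin m, (1 : ℝ) := by
            rw [Finset.sum_comm]
            apply Finset.sum_congr rfl
            intro k _
            rw [rdx_sum_prod n (fun i b => rdxBw t (xor b (g1 (k, y) i)))]
            apply Finset.prod_eq_one
            intro i _
            cases g1 (k, y) i <;> simp [rdxBw]
        _ = m := by simp
    calc _ ≤ (1 / 2) ^ n * (1 / (m : ℝ)) * ∑ y : Fin n → Bool, (m : ℝ) :=
          mul_le_mul_of_nonneg_left (Finset.sum_le_sum fun y _ => h1 y) (by positivity)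
      _ = 1 := by
        simp
        field_simp
  have hg := rdx_gibbs P Q hP hQ (rdx_iid_one _ hq1 n) hQ1
  have hL : ∑ xy, P xy * Real.logb 2 (P xy) = n * (-1 - TWR.binEnt ρ) := by
    have h1 : ∀ xy, Real.logb 2 (P xy) =
        ∑ i, (fun s => Real.logb 2 (TWR.dsbs ρ s)) (xy.1 i, xy.2 i) := by
      intro xy
      exact Real.logb_prod _ _ (fun i _ => (hq _).ne')
    rw [Finset.sum_congr rfl fun xy _ => by rw [h1 xy], hPdef,
      rdx_iid_sum _ (fun s => Real.logb 2 (TWR.dsbs ρ s)) hq1]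
    congr 1
    have h2 : ∀ x y, Real.logb 2 (TWR.dsbs ρ (x, y)) = -1 + Real.logb 2 (rdxBw ρ (xor x y)) := by
      intro x y
      rw [rdx_dsbs, Real.logb_mul (by norm_num) (rdx_bw_pos hρ0 hρ1 _).ne']
      congr 1
      rw [one_div, Real.logb_inv, Real.logb_self_eq_one (by norm_num)]
    simp only [Fintype.sum_prod_type, h2, rdx_dsbs]
    simp [rdxBw, TWR.binEnt]
    ring
  have hR : ∑ xy, P xy * Real.logb 2 (Q xy) = -n - Real.logb 2 m + n * Real.logb 2 (1 - t) +
      (Real.logb 2 t - Real.logb 2 (1 - t)) * (n * TWR.Delta1 (TWR.dsbs ρ) TWR.dHam f g1) := by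
    have h1 : ∀ xy, P xy * Real.logb 2 (Q xy) =
        P xy * (-n - Real.logb 2 m + n * Real.logb 2 (1 - t)) +
        (Real.logb 2 t - Real.logb 2 (1 - t)) * (n * (P xy * ((n : ℝ)⁻¹ *
          ∑ i, TWR.dHam (xy.1 i) (g1 (f xy, xy.2) i)))) := by
      intro xy
      have h2 : Real.logb 2 (∏ i, rdxBw t (xor (xy.1 i) (g1 (f xy, xy.2) i))) =
          n * Real.logb 2 (1 - t) + (Real.logb 2 t - Real.logb 2 (1 - t)) *
            ∑ i, TWR.dHam (xy.1 i) (g1 (f xy, xy.2) i) := by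
        rw [Real.logb_prod _ _ (fun i _ => (hbt _).ne'), Finset.mul_sum]
        have h3 : (n : ℝ) * Real.logb 2 (1 - t) = ∑ i : Fin n, Real.logb 2 (1 - t) := by simp
        rw [h3, ← Finset.sum_add_distrib]
        apply Finset.sum_congr rfl
        intro i _
        rw [rdx_dHam_bool]
        cases (xor (xy.1 i) (g1 (f xy, xy.2) i)) <;> simp [rdxBw]
      have h4 : Real.logb 2 ((1 / 2 : ℝ) ^ n * (1 / m)) = -n - Real.logb 2 m := by
        rw [Real.logb_mul (by positivity) (by positivity), Real.logb_pow, one_div, one_div,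
          Real.logb_inv, Real.logb_inv, Real.logb_self_eq_one (by norm_num)]
        ring
      simp only [hQdef]
      rw [Real.logb_mul (by positivity) (hpr xy).ne', h2, h4]
      field_simp
      ring
    rw [Finset.sum_congr rfl fun xy _ => h1 xy, Finset.sum_add_distrib, ← Finset.sum_mul,
      ← Finset.mul_sum, ← Finset.mul_sum, hPdef, rdx_iid_one _ hq1 n, one_mul]
    rfl
  rw [hL, hR] at hg
  have hmono : Real.logb 2 t ≤ Real.logb 2 (1 - t) :=
    Real.logb_le_logb_of_le (by norm_num) ht0 (by linarith)
  have h5 : (Real.logb 2 t - Real.logb 2 (1 - t)) * (n * t) ≤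
      (Real.logb 2 t - Real.logb 2 (1 - t)) * (n * TWR.Delta1 (TWR.dsbs ρ) TWR.dHam f g1) :=
    mul_le_mul_of_nonpos_left (mul_le_mul_of_nonneg_left hΔ hn'.le) (by linarith)
  rw [le_div_iff₀ hn']
  have h6 : TWR.binEnt t = -(t * Real.logb 2 t) - (1 - t) * Real.logb 2 (1 - t) := rfl
  rw [h6]
  nlinarith

lemma rdx_swap (ρ : ℝ) (n m : ℕ) (f : (Fin n → Bool) × (Fin n → Bool) → Fin m)
    (g2 : Fin m × (Fin n → Bool) → Fin n → Bool) :
    TWR.Delta2 (TWR.dsbs ρ) TWR.dHam f g2 =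
      TWR.Delta1 (TWR.dsbs ρ) TWR.dHam (fun xy => f xy.swap) g2 := by
  unfold TWR.Delta1 TWR.Delta2
  apply Fintype.sum_equiv (Equiv.prodComm _ _)
  rintro ⟨x, y⟩
  simp [TWR.iid, rdx_dsbs, Bool.xor_comm]

lemma rdx_binEnt (x : ℝ) : TWR.binEnt x = Real.binEntropy x / Real.log 2 := by
  simp only [TWR.binEnt, Real.binEntropy, Real.logb, Real.log_inv]; ring

lemma rdx_binEnt_mono {x y : ℝ} (h0 : 0 ≤ x) (hxy : x ≤ y) (hy : y ≤ 1 / 2) :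
    TWR.binEnt x ≤ TWR.binEnt y := by
  rw [rdx_binEnt, rdx_binEnt]
  apply div_le_div_of_nonneg_right _ (Real.log_pos (by norm_num)).le
  apply Real.binEntropy_strictMonoOn.monotoneOn _ _ hxy
  · exact ⟨h0, by norm_num at *; linarith⟩
  · exact ⟨by linarith, by norm_num at *; linarith⟩

lemma rdx_binEnt_cont : Continuous TWR.binEnt := by
  have : TWR.binEnt = fun x => Real.binEntropy x / Real.log 2 := funext rdx_binEnt
  rw [this]
  exact Real.binEntropy_continuous.div_const _


open TWR in
/-- Example 1: the RD function of the DSBS with Hamming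
distortions is `h(ρ) − h(min{d1,d2})` when `min{d1,d2} ≤ ρ`, and `0` otherwise. -/
theorem rd_dsbs
    (ρ : ℝ) (hρ : ρ ∈ Set.Icc (0 : ℝ) (1 / 2))
    (d1 d2 : ℝ) (hd1 : 0 ≤ d1) (hd2 : 0 ≤ d2) :
    RD (dsbs ρ) (dHam (α := Bool)) (dHam (α := Bool)) d1 d2 =
      if min d1 d2 ≤ ρ then binEnt ρ - binEnt (min d1 d2) else 0 := by
  obtain ⟨hρ0, hρ1⟩ := hρ
  set d := min d1 d2 with hd
  have hd0 : 0 ≤ d := le_min hd1 hd2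
  unfold RD
  rcases lt_or_ge d ρ with hlt | hge
  · rw [if_pos hlt.le]
    apply le_antisymm
    · apply csInf_le ⟨0, fun r hr => hr.1⟩
      refine ⟨sub_nonneg.mpr (rdx_binEnt_mono hd0 hlt.le hρ1), ?_⟩
      intro ε hε
      set s := min (ε / 2) ((ρ - d) / 2) with hs
      have hs0 : 0 < s := lt_min (by linarith) (by linarith)
      have hs1 : s ≤ ε / 2 := min_le_left _ _
      have hs2 : s ≤ (ρ - d) / 2 := min_le_right _ _
      obtain ⟨n, m, f, g1, g2, hn, hr, hD1, hD2⟩ := rdx_ach_code ρ (d + s) (ε / 4)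
        (by linarith) (by linarith) hρ1 (by linarith)
        (rdx_binEnt_mono (by linarith) (by linarith) hρ1)
      have hm : binEnt d ≤ binEnt (d + s) := rdx_binEnt_mono hd0 (by linarith) (by linarith)
      have h1 : d ≤ d1 := min_le_left _ _
      have h2 : d ≤ d2 := min_le_right _ _
      exact ⟨n, m, f, g1, g2, hn, by linarith, by linarith, by linarith⟩
    · apply le_csInf
      · refine ⟨binEnt ρ + 1, ?_, ?_⟩
        · have h0 : binEnt 0 ≤ binEnt ρ := rdx_binEnt_mono le_rfl hρ0 hρ1
          have : binEnt 0 = 0 := by simp [binEnt]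
          linarith
        · intro ε hε
          set s := min (ε / 2) ((ρ - d) / 2) with hs
          have hs0 : 0 < s := lt_min (by linarith) (by linarith)
          have hs1 : s ≤ ε / 2 := min_le_left _ _
          have hs2 : s ≤ (ρ - d) / 2 := min_le_right _ _
          obtain ⟨n, m, f, g1, g2, hn, hr, hD1, hD2⟩ := rdx_ach_code ρ (d + s) (ε / 4)
            (by linarith) (by linarith) hρ1 (by linarith)
            (rdx_binEnt_mono (by linarith) (by linarith) hρ1)
          have hm : binEnt 0 ≤ binEnt (d + s) :=
            rdx_binEnt_mono le_rfl (by linarith) (by linarith)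
          have h0 : binEnt 0 = 0 := by simp [binEnt]
          have h1 : d ≤ d1 := min_le_left _ _
          have h2 : d ≤ d2 := min_le_right _ _
          exact ⟨n, m, f, g1, g2, hn, by linarith, by linarith, by linarith⟩
      · rintro r ⟨hr0, hr⟩
        have hle : ∀ ε ∈ Set.Ioo 0 (ρ - d), binEnt ρ - binEnt (d + ε) ≤ r + ε := by
          intro ε hε
          obtain ⟨n, m, f, g1, g2, hn, hrate, hD1, hD2⟩ := hr ε hε.1
          have h1 := hε.1
          have h2 := hε.2
          refine le_trans ?_ hrate
          rcases le_total d1 d2 with h | h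
          · have hdd : d = d1 := min_eq_left h
            exact rdx_converse ρ (d + ε) (by linarith) (by linarith) (by linarith) (by linarith)
              n m hn f g1 (by rw [hdd]; exact hD1)
          · have hdd : d = d2 := min_eq_right h
            rw [rdx_swap] at hD2
            exact rdx_converse ρ (d + ε) (by linarith) (by linarith) (by linarith) (by linarith)
              n m hn _ g2 (by rw [hdd]; exact hD2)
        have hc1 : Continuous fun ε : ℝ => binEnt ρ - binEnt (d + ε) :=
          continuous_const.sub (rdx_binEnt_cont.comp (continuous_const.add continuous_id))
        have hc2 : Continuous fun ε : ℝ => r + ε := continuous_const.add continuous_id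
        have t1 := (hc1.tendsto 0).mono_left (nhdsWithin_le_nhds (s := Set.Ioi (0 : ℝ)))
        have t2 := (hc2.tendsto 0).mono_left (nhdsWithin_le_nhds (s := Set.Ioi (0 : ℝ)))
        have := le_of_tendsto_of_tendsto t1 t2
          (Filter.eventually_of_mem (Ioo_mem_nhdsGT (by linarith : (0 : ℝ) < ρ - d)) hle)
        simpa using this
  · have hval : (if d ≤ ρ then binEnt ρ - binEnt d else 0) = 0 := by
      split_ifs with h
      · rw [le_antisymm h hge, sub_self]
      · rfl
    rw [hval]
    have hmem : (0 : ℝ) ∈ {r : ℝ | 0 ≤ r ∧ RDAchievable (dsbs ρ) (dHam (α := Bool))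
        (dHam (α := Bool)) d1 d2 r} := by
      refine ⟨le_rfl, fun ε hε => ?_⟩
      obtain ⟨f, g1, g2, hD1, hD2⟩ := rdx_zero_code ρ
      have h1 : d ≤ d1 := min_le_left _ _
      have h2 : d ≤ d2 := min_le_right _ _
      exact ⟨1, 1, f, g1, g2, one_pos, by simp; linarith, by linarith, by linarith⟩
    exact le_antisymm (csInf_le ⟨0, fun r hr => hr.1⟩ hmem) (le_csInf ⟨0, hmem⟩ fun r hr => hr.1)
end
end
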